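/- For every integer n ≥ 0, the fourth symmetrized rank moment satisfies η₄(25n+24) ≡ 0 (mod 5). -/

import Mathlib

/-- The rank of a partition: its largest part minus its number of parts. -/
def partitionRank {n : ℕ} (P : Nat.Partition n) : ℤ :=
  (P.parts.sup : ℤ) - (P.parts.card : ℤ)

/-- `N(m,n)`: the number of partitions of `n` with rank `m`. -/
noncomputable def rankCount (m : ℤ) (n : ℕ) : ℕ :=
  Nat.card {P : Nat.Partition n // partitionRank P = m}

/-- The generalized binomial coefficient `C(x,k) = x(x-1)⋯(x-k+1)/k!` for an integer `x`. -/
def intChoose (x : ℤ) (k : ℕ) : ℤ :=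
  (∏ i ∈ Finset.range k, (x - (i : ℤ))) / (Nat.factorial k : ℤ)

/-- The fourth symmetrized rank moment `η₄(n) = Σ_{m∈ℤ} C(m+1,4)·N(m,n)`. -/
noncomputable def eta4 (n : ℕ) : ℤ :=
  ∑ᶠ m : ℤ, intChoose (m + 1) 4 * (rankCount m n : ℤ)

/-!
Modulo `5`, `C(m + 1, 4)` is `1` if `m ≡ 3 (mod 5)` and `0` otherwise, so `η₄(n)` counts the
partitions of `n` of rank congruent to `3`. Dyson's bijection turns the generating function of the
partitions of a given rank into a partial theta series over `(q; q)_∞`. Summing over the ranks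
`m ≡ 3` gives
`-(q; q)_∞ ∑ₙ η₄(n)qⁿ ≡ ∑ₖ (-1)ᵏ q^(3k(k + 1)/2) / (1 - q^(5k))  (mod 5)`, where `k ≠ 0`.

Write `f_r` for the series formed by the coefficients of `f` of index congruent to `r` modulo `5`,
and put `E = (q; q)_∞`, `φ = (q⁵; q⁵)_∞`, `T₁ = φ(q, q⁴; q⁵)_∞` and `T₂ = φ(q², q³; q⁵)_∞`. Sorting
the Lambert series by `k mod 5` gives five Appell series `Aₖ`. Three of them satisfy
`φ³T₁ = T₁T₂(A₁ + A₃) - qT₂²A₂`: this is the limit of a partial fraction expansion whose poles lie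
on the geometric progressions through `q`, `q²` and `q³` with ratio `q⁵`. Euler's pentagonal number
theorem and Jacobi's identity for `E³` give `E₀T₁ ≡ φT₂` and `(E⁴)₄ ≡ 0`. Multiplying the Lambert
series by `E⁴`, where `E⁵ ≡ φ`, then yields `(∑ₙ η₄(n)qⁿ)₄ ≡ φ⁴/E ≡ E⁴φ³`. Since `φ` is a series in
`q⁵`, the coefficients of index congruent to `4` of the right-hand side vanish with `(E⁴)₄`.
-/

namespace RankCongruence

open PowerSeries Finset Filter Topology
open scoped PowerSeries.WithPiTopology

section PowerSeries

variable {R : Type*} [CommRing R]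

/-- The ideal `(X ^ L)` of `R⟦X⟧`. Congruence modulo it means agreement of all coefficients of
index less than `L`, and is the form in which limits of formal power series are taken here. -/
noncomputable abbrev powIdeal (R : Type*) [CommRing R] (L : ℕ) : Ideal R⟦X⟧ :=
  Ideal.span {X ^ L}

variable {f g k : R⟦X⟧} {L M : ℕ}

lemma smodEq_powIdeal_iff_dvd : f ≡ g [SMOD powIdeal R L] ↔ X ^ L ∣ f - g := by
  rw [SModEq.sub_mem, Ideal.mem_span_singleton]

lemma smodEq_powIdeal_iff_coeff :
    f ≡ g [SMOD powIdeal R L] ↔ ∀ n < L, coeff n f = coeff n g := by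
  simp only [smodEq_powIdeal_iff_dvd, X_pow_dvd_iff, map_sub, sub_eq_zero]

lemma powIdeal_anti (h : M ≤ L) : powIdeal R L ≤ powIdeal R M :=
  Ideal.span_singleton_le_span_singleton.2 (pow_dvd_pow X h)

lemma smodEq_zero_of_dvd (h : X ^ L ∣ f) : f ≡ 0 [SMOD powIdeal R L] := by
  rwa [smodEq_powIdeal_iff_dvd, sub_zero]

lemma eq_of_forall_smodEq (h : ∀ L, f ≡ g [SMOD powIdeal R L]) : f = g :=
  PowerSeries.ext fun n ↦ smodEq_powIdeal_iff_coeff.1 (h (n + 1)) n n.lt_succ_self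

lemma mul_smodEq_mul_of_dvd {e : ℕ} (hk : X ^ e ∣ k) (h : f ≡ g [SMOD powIdeal R L]) :
    k * f ≡ k * g [SMOD powIdeal R (e + L)] := by
  rw [smodEq_powIdeal_iff_dvd] at h ⊢
  rw [← mul_sub, pow_add]
  exact mul_dvd_mul hk h

lemma dvd_of_notMem_Ico {u : ℤ → R⟦X⟧} (h : ∀ j : ℤ, X ^ (j.natAbs - 1) ∣ u j) {n : ℕ} {j : ℤ}
    (hj : j ∉ Ico (-n : ℤ) n) : X ^ (n - 1) ∣ u j :=
  (pow_dvd_pow X (by rw [mem_Ico] at hj; omega)).trans (h j)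

variable [TopologicalSpace R]

section Limits

variable [T2Space R]

lemma smodEq_of_tendsto {ι : Type*} {l : Filter ι} [l.NeBot] {u : ι → R⟦X⟧}
    (hu : Tendsto u l (𝓝 f)) (h : ∀ᶠ i in l, u i ≡ g [SMOD powIdeal R L]) :
    f ≡ g [SMOD powIdeal R L] := by
  rw [smodEq_powIdeal_iff_coeff]
  intro n hn
  refine tendsto_nhds_unique (((WithPiTopology.continuous_coeff R n).tendsto f).comp hu) ?_
  refine tendsto_const_nhds.congr' (h.mono fun i hi ↦ ?_)
  exact (smodEq_powIdeal_iff_coeff.1 hi n hn).symm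

lemma smodEq_sum_of_hasSum {ι : Type*} {u : ι → R⟦X⟧} (hu : HasSum u f) (s : Finset ι)
    (h : ∀ i ∉ s, X ^ L ∣ u i) : f ≡ ∑ i ∈ s, u i [SMOD powIdeal R L] := by
  classical
  refine smodEq_of_tendsto hu ((eventually_ge_atTop s).mono fun t hst ↦ ?_)
  rw [smodEq_powIdeal_iff_dvd, ← sum_sdiff hst, add_sub_cancel_right]
  exact dvd_sum fun i hi ↦ h i (mem_sdiff.1 hi).2

end Limits

lemma summable_of_finite_not_dvd {ι : Type*} {u : ι → R⟦X⟧}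
    (h : ∀ L, {i | ¬ X ^ L ∣ u i}.Finite) : Summable u := by
  refine (WithPiTopology.summable_iff_summable_coeff R).2 fun n ↦
    summable_of_hasFiniteSupport ((h (n + 1)).subset fun i hi hdvd ↦ hi ?_)
  exact X_pow_dvd_iff.1 hdvd n n.lt_succ_self

lemma summable_nat_of_dvd {u : ℕ → R⟦X⟧} (h : ∀ n, X ^ n ∣ u n) : Summable u :=
  summable_of_finite_not_dvd fun L ↦ (Set.finite_Iio L).subset fun n hn ↦
    not_le.1 fun hL ↦ hn ((pow_dvd_pow X hL).trans (h n))

lemma summable_int_of_dvd {u : ℤ → R⟦X⟧} (h : ∀ j : ℤ, X ^ (j.natAbs - 1) ∣ u j) :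
    Summable u :=
  summable_of_finite_not_dvd fun L ↦ (Ico (-(L + 1 : ℕ) : ℤ) (L + 1 : ℕ)).finite_toSet.subset
    fun _ hj ↦ not_not.1 fun hmem ↦ hj (dvd_of_notMem_Ico h hmem)

lemma smodEq_sum_Ico_of_hasSum [T2Space R] {u : ℤ → R⟦X⟧} (hu : HasSum u f)
    (h : ∀ j : ℤ, X ^ (j.natAbs - 1) ∣ u j) (n : ℕ) :
    f ≡ ∑ j ∈ Ico (-n : ℤ) n, u j [SMOD powIdeal R (n - 1)] :=
  smodEq_sum_of_hasSum hu _ fun _ hj ↦ dvd_of_notMem_Ico h hj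

lemma hasSum_nat_of_smodEq [T2Space R] {u : ℕ → R⟦X⟧} (hu : ∀ n, X ^ n ∣ u n)
    (h : ∀ n, f ≡ ∑ k ∈ range n, u k [SMOD powIdeal R n]) : HasSum u f := by
  obtain ⟨g, hg⟩ := summable_nat_of_dvd hu
  suffices f = g from this ▸ hg
  refine eq_of_forall_smodEq fun n ↦ (h n).trans (smodEq_sum_of_hasSum hg _ fun k hk ↦ ?_).symm
  exact (pow_dvd_pow X (by simpa using hk)).trans (hu k)

lemma hasSum_int_of_smodEq [T2Space R] {u : ℤ → R⟦X⟧} (hu : ∀ j : ℤ, X ^ (j.natAbs - 1) ∣ u j)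
    (h : ∀ n : ℕ, f ≡ ∑ j ∈ Ico (-(n + 1 : ℕ) : ℤ) (n + 1 : ℕ), u j [SMOD powIdeal R (n - 1)]) :
    HasSum u f := by
  obtain ⟨g, hg⟩ := summable_int_of_dvd hu
  suffices f = g from this ▸ hg
  exact eq_of_forall_smodEq fun L ↦ (h (L + 1)).trans
    ((smodEq_sum_Ico_of_hasSum hg hu (L + 2)).mono (powIdeal_anti (by omega))).symm

lemma continuous_expand (p : ℕ) (hp : p ≠ 0) : Continuous (expand p hp : R⟦X⟧ → R⟦X⟧) := by
  refine continuous_iff_continuousAt.2 fun f ↦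
    (WithPiTopology.tendsto_iff_coeff_tendsto R _ _ _).2 fun n ↦ ?_
  simp only [coeff_expand]
  split_ifs
  · exact (WithPiTopology.continuous_coeff R _).tendsto f
  · exact tendsto_const_nhds

lemma hasSum_expand {p : ℕ} (hp : p ≠ 0) {ι : Type*} {u : ι → R⟦X⟧} (hu : HasSum u f) :
    HasSum (fun i ↦ expand p hp (u i)) (expand p hp f) :=
  hu.map (expand p hp) (continuous_expand p hp)

end PowerSeries

lemma hasSum_int_of_hasSum_residues {M : Type*} [AddCommMonoid M] [TopologicalSpace M]
    [ContinuousAdd M] {p : ℕ} [NeZero p] {u : ℤ → M} {a : Fin p → M}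
    (h : ∀ r : Fin p, HasSum (fun j : ℤ ↦ u (p * j + r)) (a r)) : HasSum u (∑ r, a r) := by
  let e := (Int.divModEquiv p).symm
  have he (r : Fin p) (j : ℤ) : e (j, r) = p * j + r := by simp [e, mul_comm]
  refine e.hasSum_iff.1 ?_
  have hfiber (r : Fin p) : HasSum (fun x : ℤ × Fin p ↦ if x.2 = r then u (e x) else 0) (a r) := by
    refine ((Prod.mk_left_injective r).hasSum_iff fun x hx ↦ if_neg fun hxr ↦ hx ⟨x.1, ?_⟩).1 ?_
    · rw [← hxr]
    · simpa only [Function.comp_def, if_true, he] using h r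
  convert hasSum_sum (s := univ) fun r _ ↦ hfiber r with x
  rw [sum_ite_eq univ x.2 fun _ ↦ u (e x), if_pos (mem_univ _), Function.comp_apply]

section QPochhammer

/-- The finite `q`-shifted factorial `(a; q)ₙ = (1 - a)(1 - aq)⋯(1 - aqⁿ⁻¹)`. -/
def qPoch {A : Type*} [CommRing A] (a q : A) (n : ℕ) : A :=
  ∏ t ∈ range n, (1 - a * q ^ t)

section Finite

variable {A : Type*} [CommRing A] (a q : A)

@[simp] lemma qPoch_zero : qPoch a q 0 = 1 := rfl

lemma qPoch_succ (n : ℕ) : qPoch a q (n + 1) = qPoch a q n * (1 - a * q ^ n) :=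
  prod_range_succ _ n

lemma qPoch_succ' (n : ℕ) : qPoch a q (n + 1) = (1 - a) * qPoch (a * q) q n := by
  simp only [qPoch, prod_range_succ', pow_succ', pow_zero, mul_one, mul_assoc]
  rw [mul_comm]

lemma map_qPoch {B F : Type*} [CommRing B] [FunLike F A B] [RingHomClass F A B] (φ : F) (n : ℕ) :
    φ (qPoch a q n) = qPoch (φ a) (φ q) n := by
  simp only [qPoch, map_prod, map_sub, map_one, map_mul, map_pow]

end Finite

variable {R : Type*} [CommRing R] {a q : R⟦X⟧}

lemma constantCoeff_qPoch (ha : constantCoeff a = 0) (n : ℕ) :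
    constantCoeff (qPoch a q n) = 1 := by
  rw [map_qPoch, ha]
  simp [qPoch]

lemma X_pow_dvd_mul_pow (hq : X ∣ q) (a : R⟦X⟧) (n : ℕ) : X ^ n ∣ a * q ^ n :=
  (pow_dvd_pow_of_dvd hq n).mul_left a

lemma qPoch_smodEq_qPoch (hq : X ∣ q) (a : R⟦X⟧) {n m : ℕ} (h : n ≤ m) :
    qPoch a q m ≡ qPoch a q n [SMOD powIdeal R n] := by
  induction m, h using Nat.le_induction with
  | base => rfl
  | succ m hm ih =>
    rw [qPoch_succ, mul_one_sub]
    refine (ih.sub (smodEq_zero_of_dvd (f := _ * _) ?_)).trans (by rw [sub_zero])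
    exact ((pow_dvd_pow X hm).trans (X_pow_dvd_mul_pow hq a m)).mul_left _

variable [TopologicalSpace R]

/-- The infinite `q`-shifted factorial `(a; q)_∞ = ∏ₜ (1 - aqᵗ)` of formal power series, an infinite
product that converges coefficientwise when `q` has no constant term. -/
noncomputable def qPochInf (a q : R⟦X⟧) : R⟦X⟧ :=
  ∏' t : ℕ, (1 - a * q ^ t)

lemma multipliable_qPochInf (hq : X ∣ q) (a : R⟦X⟧) : Multipliable fun t : ℕ ↦ 1 - a * q ^ t := by
  simp only [sub_eq_add_neg]
  refine WithPiTopology.multipliable_one_add_of_tendsto_order_atTop_nhds_top R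
    (ENat.tendsto_nhds_top_iff_natCast_lt.2 fun n ↦ (eventually_gt_atTop n).mono fun t ht ↦ ?_)
  refine (Nat.cast_lt.2 ht).trans_le ?_
  rw [order_neg]
  exact nat_le_order _ t (X_pow_dvd_iff.1 (X_pow_dvd_mul_pow hq a t))

variable [T2Space R]

lemma qPochInf_smodEq (hq : X ∣ q) (a : R⟦X⟧) (n : ℕ) :
    qPochInf a q ≡ qPoch a q n [SMOD powIdeal R n] :=
  smodEq_of_tendsto (multipliable_qPochInf hq a).hasProd.tendsto_prod_nat
    ((eventually_ge_atTop n).mono fun _ hm ↦ qPoch_smodEq_qPoch hq a hm)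

lemma constantCoeff_qPochInf (ha : constantCoeff a = 0) (hq : X ∣ q) :
    constantCoeff (qPochInf a q) = 1 := by
  have h := smodEq_powIdeal_iff_coeff.1 (qPochInf_smodEq hq a 1) 0 one_pos
  rwa [coeff_zero_eq_constantCoeff_apply, coeff_zero_eq_constantCoeff_apply,
    constantCoeff_qPoch ha] at h

lemma expand_qPochInf {p : ℕ} (hp : p ≠ 0) (hq : X ∣ q) (a : R⟦X⟧) :
    expand p hp (qPochInf a q) = qPochInf (expand p hp a) (expand p hp q) := by
  rw [qPochInf, (multipliable_qPochInf hq a).map_tprod _ (continuous_expand p hp)]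
  simp only [qPochInf, map_sub, map_one, map_mul, map_pow]

lemma qPochInf_X_X : qPochInf X X = pentagonalSeries R := by
  rw [← WithPiTopology.tprod_one_sub_X_pow]
  simp only [qPochInf, pow_succ']

end QPochhammer

section Dyson

open Multiset (replicate card_le_card filter_le)

/-- Delete the first column of the Ferrers diagram of the partition with multiset of parts `M`. -/
def removeColumn (M : Multiset ℕ) : Multiset ℕ :=
  (M.map (· - 1)).filter (· ≠ 0)

/-- Add a first column of length `l` to the Ferrers diagram of the partition with multiset of
parts `M`; meaningful when `M` has at most `l` parts. -/
def addColumn (l : ℕ) (M : Multiset ℕ) : Multiset ℕ :=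
  M.map (· + 1) + replicate (l - M.card) 1

lemma sum_map_add_one (M : Multiset ℕ) : (M.map (· + 1)).sum = M.sum + M.card := by
  simp [Multiset.sum_map_add]

lemma card_removeColumn_le (M : Multiset ℕ) : (removeColumn M).card ≤ M.card := by
  simpa [removeColumn] using card_le_card (filter_le (· ≠ 0) (M.map (· - 1)))

lemma zero_notMem_removeColumn (M : Multiset ℕ) : 0 ∉ removeColumn M := by
  simp [removeColumn]

lemma zero_notMem_addColumn (l : ℕ) (M : Multiset ℕ) : 0 ∉ addColumn l M := by
  simp [addColumn, Multiset.mem_replicate]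

lemma card_addColumn {l : ℕ} {M : Multiset ℕ} (h : M.card ≤ l) : (addColumn l M).card = l := by
  simp [addColumn, h]

lemma sum_addColumn {l : ℕ} {M : Multiset ℕ} (h : M.card ≤ l) :
    (addColumn l M).sum = M.sum + l := by
  simp only [addColumn, Multiset.sum_add, sum_map_add_one, Multiset.sum_replicate, smul_eq_mul]
  omega

lemma addColumn_removeColumn {M : Multiset ℕ} (h : 0 ∉ M) :
    addColumn M.card (removeColumn M) = M := by
  induction M using Multiset.induction_on with
  | empty => rfl
  | cons a s ih =>
    obtain ⟨ha, hs⟩ : 0 ≠ a ∧ 0 ∉ s := by simpa using h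
    have ih := ih hs
    have hcard := card_removeColumn_le s
    simp only [addColumn, removeColumn] at ih hcard ⊢
    rw [Multiset.map_cons, Multiset.card_cons]
    obtain rfl | ha1 := eq_or_ne a 1
    · rw [Multiset.filter_cons_of_neg _ (by simp), Nat.succ_sub hcard, Multiset.replicate_succ,
        Multiset.add_cons, ih]
    · have hpred : a - 1 ≠ 0 := by omega
      rw [Multiset.filter_cons_of_pos (p := (· ≠ 0)) _ hpred, Multiset.card_cons,
        Nat.add_sub_add_right, Multiset.map_cons, Multiset.cons_add, ih,
        Nat.sub_add_cancel (Nat.pos_of_ne_zero ha.symm)]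

lemma removeColumn_addColumn {M : Multiset ℕ} (h : 0 ∉ M) (l : ℕ) :
    removeColumn (addColumn l M) = M := by
  have hself : M.filter (· ≠ 0) = M :=
    Multiset.filter_eq_self.2 fun a ha ↦ ne_of_mem_of_not_mem ha h
  simp only [removeColumn, addColumn, Multiset.map_add, Multiset.map_map, Multiset.map_replicate,
    Multiset.filter_add, Function.comp_def, Nat.add_sub_cancel, Multiset.map_id', hself]
  rw [Multiset.filter_eq_nil.2 fun a ha ↦ not_not.2 (Multiset.eq_of_mem_replicate ha), add_zero]

lemma sum_removeColumn_add_card {M : Multiset ℕ} (h : 0 ∉ M) :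
    (removeColumn M).sum + M.card = M.sum := by
  rw [← sum_addColumn (card_removeColumn_le M), addColumn_removeColumn h]

/-- Dyson's map with parameter `s`: delete the first column, of length `l`, of a Ferrers diagram and
add a first row of length `l + s`. The added row is dropped when it is empty. -/
def dysonMap (s : ℤ) (M : Multiset ℕ) : Multiset ℕ :=
  if (M.card + s).toNat = 0 then removeColumn M else (M.card + s).toNat ::ₘ removeColumn M

/-- The inverse of Dyson's map: delete the first row, of length `b`, of a Ferrers diagram and add a
first column of length `b - s`. -/
def dysonInv (s : ℤ) (M : Multiset ℕ) : Multiset ℕ :=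
  addColumn (M.sup - s).toNat (M.erase M.sup)

lemma sup_mem_of_ne_zero {M : Multiset ℕ} (h : M ≠ 0) : M.sup ∈ M := by
  obtain ⟨i, hi, hsup⟩ := exists_mem_eq_sup M.toFinset (Multiset.toFinset_nonempty.2 h) id
  have : M.sup = i := by simpa [Finset.sup_def] using hsup
  exact this ▸ Multiset.mem_toFinset.1 hi

variable {s : ℤ} {M : Multiset ℕ}

lemma card_add_nonneg (h0 : 0 ∉ M) (hsum : 0 ≤ M.sum + s)
    (hrank : (M.sup : ℤ) - M.card ≤ s + 1) : 0 ≤ M.card + s := by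
  obtain rfl | hM := eq_or_ne M 0
  · simpa using hsum
  · have hsup : M.sup ≠ 0 := ne_of_mem_of_not_mem (sup_mem_of_ne_zero hM) h0
    omega

lemma zero_notMem_dysonMap (s : ℤ) (M : Multiset ℕ) : 0 ∉ dysonMap s M := by
  have := zero_notMem_removeColumn M
  rw [dysonMap]
  split_ifs with hb
  · exact this
  · simp [this, Ne.symm hb]

lemma sum_dysonMap (h0 : 0 ∉ M) (hb : 0 ≤ M.card + s) : ((dysonMap s M).sum : ℤ) = M.sum + s := by
  have := sum_removeColumn_add_card h0
  rw [dysonMap]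
  split_ifs
  · omega
  · rw [Multiset.sum_cons]
    omega

lemma card_dysonMap_le (s : ℤ) (M : Multiset ℕ) : (dysonMap s M).card ≤ M.card + 1 := by
  have := card_removeColumn_le M
  rw [dysonMap]
  split_ifs
  · omega
  · rw [Multiset.card_cons]
    omega

lemma sup_removeColumn_le (M : Multiset ℕ) : (removeColumn M).sup ≤ M.sup - 1 := by
  refine Multiset.sup_le.2 fun x hx ↦ ?_
  obtain ⟨⟨y, hy, rfl⟩, -⟩ : (∃ y ∈ M, y - 1 = x) ∧ x ≠ 0 := by simpa [removeColumn] using hx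
  exact Nat.sub_le_sub_right (Multiset.le_sup hy) 1

lemma sup_dysonMap (hb : 0 ≤ M.card + s) (hrank : (M.sup : ℤ) - M.card ≤ s + 1) :
    ((dysonMap s M).sup : ℤ) = M.card + s := by
  have := sup_removeColumn_le M
  rw [dysonMap]
  split_ifs
  · omega
  · rw [Multiset.sup_cons, sup_eq_left.2] <;> omega

lemma erase_dysonMap (s : ℤ) (M : Multiset ℕ) :
    (dysonMap s M).erase (M.card + s).toNat = removeColumn M := by
  rw [dysonMap]
  split_ifs with hb
  · rw [hb, Multiset.erase_of_notMem (zero_notMem_removeColumn M)]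
  · exact Multiset.erase_cons_head _ _

lemma dysonInv_dysonMap (h0 : 0 ∉ M) (hb : 0 ≤ M.card + s)
    (hrank : (M.sup : ℤ) - M.card ≤ s + 1) : dysonInv s (dysonMap s M) = M := by
  have hsup := sup_dysonMap hb hrank
  have hsup' : (dysonMap s M).sup = (M.card + s).toNat := by omega
  rw [dysonInv, hsup, add_sub_cancel_right, Int.toNat_natCast, hsup', erase_dysonMap,
    addColumn_removeColumn h0]

lemma zero_notMem_dysonInv (s : ℤ) (M : Multiset ℕ) : 0 ∉ dysonInv s M :=
  zero_notMem_addColumn _ _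

lemma card_erase_sup_le (hsum : 0 ≤ M.sum - s) (hrank : s - 1 ≤ (M.sup : ℤ) - M.card) :
    ((M.erase M.sup).card : ℤ) ≤ M.sup - s := by
  obtain rfl | hM := eq_or_ne M 0
  · simpa using hsum
  · have := Multiset.card_erase_add_one (sup_mem_of_ne_zero hM)
    omega

lemma sum_erase_sup (M : Multiset ℕ) : M.sup + (M.erase M.sup).sum = M.sum := by
  obtain rfl | hM := eq_or_ne M 0
  · rfl
  · exact Multiset.sum_erase (sup_mem_of_ne_zero hM)

lemma sum_dysonInv (hcard : ((M.erase M.sup).card : ℤ) ≤ M.sup - s) :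
    ((dysonInv s M).sum : ℤ) = M.sum - s := by
  have := sum_erase_sup M
  rw [dysonInv, sum_addColumn] <;> omega

lemma card_dysonInv (hcard : ((M.erase M.sup).card : ℤ) ≤ M.sup - s) :
    ((dysonInv s M).card : ℤ) = M.sup - s := by
  rw [dysonInv, card_addColumn] <;> omega

lemma sup_dysonInv_le (s : ℤ) (M : Multiset ℕ) : (dysonInv s M).sup ≤ M.sup + 1 := by
  refine Multiset.sup_le.2 fun x hx ↦ ?_
  obtain ⟨y, hy, rfl⟩ | hx := Multiset.mem_add.1 hx |>.imp_left Multiset.mem_map.1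
  · exact Nat.succ_le_succ (Multiset.le_sup (Multiset.mem_of_mem_erase hy))
  · rw [Multiset.eq_of_mem_replicate hx]
    exact Nat.le_add_left 1 _

lemma dysonMap_dysonInv (h0 : 0 ∉ M) (hcard : ((M.erase M.sup).card : ℤ) ≤ M.sup - s) :
    dysonMap s (dysonInv s M) = M := by
  have hsup : ((dysonInv s M).card + s).toNat = M.sup := by rw [card_dysonInv hcard]; omega
  rw [dysonMap, hsup, dysonInv, removeColumn_addColumn (fun h ↦ h0 (Multiset.mem_of_mem_erase h))]
  obtain rfl | hM := eq_or_ne M 0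
  · rfl
  · have hmem := sup_mem_of_ne_zero hM
    rw [if_neg (ne_of_mem_of_not_mem hmem h0), Multiset.cons_erase hmem]

lemma zero_notMem_parts {n : ℕ} (p : n.Partition) : 0 ∉ p.parts := fun h ↦
  (p.parts_pos h).false

/-- The partition with a given multiset of nonzero parts. -/
def partitionOfParts {n : ℕ} (M : Multiset ℕ) (h0 : 0 ∉ M) (hsum : M.sum = n) : n.Partition where
  parts := M
  parts_pos hi := Nat.pos_of_ne_zero (ne_of_mem_of_not_mem hi h0)
  parts_sum := hsum

lemma card_parts_add_nonneg {n n' : ℕ} (hn : (n' : ℤ) = n + s) {p : n.Partition}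
    (hp : partitionRank p ≤ s + 1) : 0 ≤ p.parts.card + s :=
  card_add_nonneg (zero_notMem_parts p) (by rw [p.parts_sum]; omega) hp

lemma card_erase_parts_le {n n' : ℕ} (hn : (n' : ℤ) = n + s) {p : n'.Partition}
    (hp : s - 1 ≤ partitionRank p) : ((p.parts.erase p.parts.sup).card : ℤ) ≤ p.parts.sup - s :=
  card_erase_sup_le (by rw [p.parts_sum]; omega) hp

/-- **Dyson's bijection** between the partitions of `n` of rank at most `s + 1` and the partitions
of `n + s` of rank at least `s - 1`. -/
def dysonEquiv {n n' : ℕ} (s : ℤ) (hn : (n' : ℤ) = n + s) :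
    {p : n.Partition // partitionRank p ≤ s + 1} ≃
      {p : n'.Partition // s - 1 ≤ partitionRank p} where
  toFun p := ⟨partitionOfParts (dysonMap s p.1.parts) (zero_notMem_dysonMap _ _) (by
      have := sum_dysonMap (zero_notMem_parts p.1) (card_parts_add_nonneg hn p.2)
      rw [p.1.parts_sum] at this
      omega), by
    have hsup := sup_dysonMap (card_parts_add_nonneg hn p.2) p.2
    have hcard := card_dysonMap_le s p.1.parts
    simp only [partitionRank, partitionOfParts]
    omega⟩
  invFun p := ⟨partitionOfParts (dysonInv s p.1.parts) (zero_notMem_dysonInv _ _) (by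
      have := sum_dysonInv (card_erase_parts_le hn p.2)
      rw [p.1.parts_sum] at this
      omega), by
    have hcard := card_dysonInv (card_erase_parts_le hn p.2)
    have hsup := sup_dysonInv_le s p.1.parts
    simp only [partitionRank, partitionOfParts]
    omega⟩
  left_inv p := Subtype.ext <| Nat.Partition.ext <|
    dysonInv_dysonMap (zero_notMem_parts p.1) (card_parts_add_nonneg hn p.2) p.2
  right_inv p := Subtype.ext <| Nat.Partition.ext <|
    dysonMap_dysonInv (zero_notMem_parts p.1) (card_erase_parts_le hn p.2)

end Dyson

section RankGeneratingFunctions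

variable (R : Type*) [CommRing R]

/-- The generating function of the partitions whose rank lies in `S`. -/
noncomputable def rankSeries (S : Set ℤ) : R⟦X⟧ :=
  PowerSeries.mk fun n ↦ ((partitionRank ⁻¹' S : Set n.Partition).ncard : R)

variable {R}

lemma rankSeries_union {S T : Set ℤ} (h : Disjoint S T) :
    rankSeries R (S ∪ T) = rankSeries R S + rankSeries R T := by
  ext n
  simp only [rankSeries, coeff_mk, map_add, Set.preimage_union]
  rw [Set.ncard_union_eq (h.preimage _), Nat.cast_add]

lemma rankSeries_Ici_add_Iic (r : ℤ) :
    rankSeries R (Set.Ici (r + 1)) + rankSeries R (Set.Iic r) = rankSeries R Set.univ := by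
  rw [← rankSeries_union (by rw [Set.disjoint_left]; simp)]
  congr 1
  ext m
  simp only [Set.mem_union, Set.mem_Ici, Set.mem_Iic, Set.mem_univ, iff_true]
  omega

lemma rankSeries_Ici_eq (m : ℤ) :
    rankSeries R (Set.Ici m) = rankSeries R {m} + rankSeries R (Set.Ici (m + 1)) := by
  rw [← rankSeries_union (by simp)]
  congr 1
  ext k
  simp only [Set.mem_union, Set.mem_Ici, Set.mem_singleton_iff]
  omega

lemma rankSeries_Iic_eq (m : ℤ) :
    rankSeries R (Set.Iic m) = rankSeries R {m} + rankSeries R (Set.Iic (m - 1)) := by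
  rw [← rankSeries_union (by simp)]
  congr 1
  ext k
  simp only [Set.mem_union, Set.mem_Iic, Set.mem_singleton_iff]
  omega

lemma rankSeries_univ_mul_qPochInf [TopologicalSpace R] [IsTopologicalRing R] [T2Space R] :
    rankSeries R Set.univ * qPochInf X X = 1 := by
  have hcard : (PowerSeries.mk fun n ↦ ((Nat.Partition.restricted n fun _ ↦ True).card : R)) =
      rankSeries R Set.univ := by
    simp [Nat.Partition.restricted, rankSeries, Set.ncard_univ]
  rw [qPochInf_X_X]
  have hprod := (Nat.Partition.hasProd_powerSeriesMk_card_restricted R fun _ ↦ True).mul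
    (WithPiTopology.hasProd_one_sub_X_pow R)
  rw [hcard] at hprod
  refine hprod.unique ((hasProd_one (β := ℕ)).congr_fun fun i ↦ ?_)
  simp only [if_true, pow_mul]
  exact WithPiTopology.tsum_pow_mul_one_sub_of_constantCoeff_eq_zero (by simp)

lemma natAbs_partitionRank_le {n : ℕ} (p : n.Partition) : (partitionRank p).natAbs ≤ n - 1 := by
  have hsum := sum_removeColumn_add_card (zero_notMem_parts p)
  rw [p.parts_sum] at hsum
  unfold partitionRank
  obtain h0 | h0 := eq_or_ne p.parts 0
  · simp [h0]
  · have hmem := sup_mem_of_ne_zero h0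
    have hsup := Multiset.le_sum_of_mem hmem
    have hpos := p.parts_pos hmem
    have hcard := Multiset.card_pos.2 h0
    rw [p.parts_sum] at hsup
    omega

lemma ncard_rank_Iic_eq_Ici {n n' : ℕ} {a b : ℤ} (hab : a = b + 2) (hn : (n' : ℤ) = n + b + 1) :
    (partitionRank ⁻¹' Set.Iic a : Set n.Partition).ncard =
      (partitionRank ⁻¹' Set.Ici b : Set n'.Partition).ncard := by
  have h := Nat.card_congr (dysonEquiv (b + 1) (hn.trans (add_assoc _ _ _)))
  rw [add_assoc, one_add_one_eq_two, ← hab, add_sub_cancel_right] at h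
  exact h

lemma ncard_rank_eq_zero {S : Set ℤ} {n : ℕ} (h : ∀ m ∈ S, n ≤ m.natAbs) (hn : 0 ∉ S) :
    (partitionRank ⁻¹' S : Set n.Partition).ncard = 0 := by
  rw [Set.ncard_eq_zero, Set.eq_empty_iff_forall_notMem]
  intro p (hp : partitionRank p ∈ S)
  have hle := h _ hp
  have := natAbs_partitionRank_le p
  exact hn (by rwa [show partitionRank p = 0 by omega] at hp)

lemma rankSeries_Ici_recurrence {r : ℕ} (hr : 0 < r) :
    rankSeries R (Set.Ici r) = X ^ (r + 1) * (rankSeries R Set.univ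
      - rankSeries R (Set.Ici (r + 3 : ℕ))) := by
  rw [← rankSeries_Ici_add_Iic (r + 2 : ℤ), show (r + 2 + 1 : ℤ) = (r + 3 : ℕ) by push_cast; ring,
    add_sub_cancel_left]
  ext n
  rw [coeff_X_pow_mul']
  split_ifs with h
  · simp only [rankSeries, coeff_mk]
    exact congrArg Nat.cast (ncard_rank_Iic_eq_Ici rfl (by omega)).symm
  · rw [rankSeries, coeff_mk, ncard_rank_eq_zero, Nat.cast_zero] <;> simp <;> omega

lemma rankSeries_Iic_recurrence {r : ℕ} (hr : 0 < r) :
    rankSeries R (Set.Iic (-r)) = X ^ (r + 1) * (rankSeries R Set.univ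
      - rankSeries R (Set.Iic (-(r + 3 : ℕ)))) := by
  rw [← rankSeries_Ici_add_Iic (-(r + 3 : ℕ)), add_sub_cancel_right]
  ext n
  rw [coeff_X_pow_mul']
  split_ifs with h
  · simp only [rankSeries, coeff_mk]
    exact congrArg Nat.cast (ncard_rank_Iic_eq_Ici (by omega) (by omega))
  · rw [rankSeries, coeff_mk, ncard_rank_eq_zero, Nat.cast_zero] <;> simp <;> omega

lemma natCast_pentagonal_add_one (n : ℕ) : pentagonal (n + 1) = pentagonal n + (3 * n + 1) := by
  have h1 := two_mul_natCast_pentagonal (n : ℤ)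
  have h2 := two_mul_natCast_pentagonal (n + 1 : ℤ)
  zify
  linarith

lemma eq_sum_add_of_recurrence {h : ℕ → R⟦X⟧}
    (hrec : ∀ r, 0 < r → h r = X ^ (r + 1) * (1 - h (r + 3))) {r : ℕ} (hr : 0 < r) (n : ℕ) :
    h r = ∑ k ∈ range n, (-1) ^ k * X ^ ((k + 1) * r + pentagonal (k + 1)) +
      (-1) ^ n * X ^ (n * r + pentagonal n) * h (r + 3 * n) := by
  induction n with
  | zero => simp [pentagonal_def]
  | succ n ih =>
    rw [ih, hrec (r + 3 * n) (by omega), sum_range_succ, add_assoc (∑ _ ∈ _, _), Nat.cast_succ,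
      natCast_pentagonal_add_one, show r + 3 * (n + 1) = r + 3 * n + 3 by ring]
    congr 1
    ring

lemma le_pentagonal (n : ℕ) : n ≤ pentagonal n := by
  have := two_mul_natCast_pentagonal (n : ℤ)
  rcases n with _ | n
  · simp
  · zify
    push_cast at *
    nlinarith

lemma hasSum_of_recurrence [TopologicalSpace R] [T2Space R] {h : ℕ → R⟦X⟧}
    (hrec : ∀ r, 0 < r → h r = X ^ (r + 1) * (1 - h (r + 3))) {r : ℕ} (hr : 0 < r) :
    HasSum (fun k : ℕ ↦ (-1) ^ k * X ^ ((k + 1) * r + pentagonal (k + 1))) (h r) := by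
  refine hasSum_nat_of_smodEq (fun k ↦ ?_) fun n ↦ ?_
  · have := le_pentagonal (k + 1)
    push_cast at this
    exact (pow_dvd_pow X (by omega)).mul_left _
  · have := le_pentagonal n
    rw [smodEq_powIdeal_iff_dvd, eq_sum_add_of_recurrence hrec hr n, add_sub_cancel_left]
    exact ((pow_dvd_pow X (by omega)).mul_left _).mul_right _

end RankGeneratingFunctions

section RankExpansions

variable {R : Type*} [CommRing R] [TopologicalSpace R] [IsTopologicalRing R] [T2Space R]

lemma hasSum_rankSeries_Ici_mul {r : ℕ} (hr : 0 < r) :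
    HasSum (fun k : ℕ ↦ (-1) ^ k * X ^ ((k + 1) * r + pentagonal (k + 1)))
      (rankSeries R (Set.Ici r) * qPochInf X X) := by
  refine hasSum_of_recurrence (h := fun r ↦ rankSeries R (Set.Ici r) * qPochInf X X)
    (fun r hr ↦ ?_) hr
  rw [rankSeries_Ici_recurrence hr, mul_assoc, sub_mul, rankSeries_univ_mul_qPochInf]

lemma hasSum_rankSeries_Iic_mul {r : ℕ} (hr : 0 < r) :
    HasSum (fun k : ℕ ↦ (-1) ^ k * X ^ ((k + 1) * r + pentagonal (k + 1)))
      (rankSeries R (Set.Iic (-r)) * qPochInf X X) := by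
  refine hasSum_of_recurrence (h := fun r ↦ rankSeries R (Set.Iic (-r)) * qPochInf X X)
    (fun r hr ↦ ?_) hr
  rw [rankSeries_Iic_recurrence hr, mul_assoc, sub_mul, rankSeries_univ_mul_qPochInf]

lemma hasSum_rankSeries_singleton_mul {m : ℤ} (hm : m ≠ 0) :
    HasSum (fun k : ℕ ↦ (-1) ^ k * X ^ ((k + 1) * m.natAbs + pentagonal (k + 1)) *
      (1 - X ^ (k + 1))) (rankSeries R {m} * qPochInf X X) := by
  have hr : 0 < m.natAbs := Int.natAbs_pos.2 hm
  have hsucc : ((m.natAbs + 1 : ℕ) : ℤ) = m.natAbs + 1 := by push_cast; rfl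
  obtain hm' | hm' := m.natAbs_eq
  · have hdiff := (hasSum_rankSeries_Ici_mul (R := R) hr).sub
      (hasSum_rankSeries_Ici_mul (Nat.add_one_pos m.natAbs))
    rw [hsucc, rankSeries_Ici_eq, ← hm', add_mul, add_sub_cancel_right] at hdiff
    exact hdiff.congr_fun fun k ↦ by ring
  · have hdiff := (hasSum_rankSeries_Iic_mul (R := R) hr).sub
      (hasSum_rankSeries_Iic_mul (Nat.add_one_pos m.natAbs))
    rw [hsucc, neg_add', rankSeries_Iic_eq, ← hm', add_mul, add_sub_cancel_right] at hdiff
    exact hdiff.congr_fun fun k ↦ by ring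

end RankExpansions

section RankMoment

/-- The generating function of the fourth symmetrized rank moment, reduced modulo `5`. -/
noncomputable def eta4Series : (ZMod 5)⟦X⟧ :=
  PowerSeries.mk fun n ↦ (eta4 n : ZMod 5)

lemma intCast_intChoose_four (x : ℤ) :
    (intChoose x 4 : ZMod 5) = if (x : ZMod 5) = 4 then 1 else 0 := by
  have hdvd : ((Nat.factorial 4 : ℕ) : ℤ) ∣ ∏ i ∈ range 4, (x - i) := by
    rw [← prod_range_reflect]
    convert Nat.factorial_coe_dvd_prod 4 (x - 3) using 2 with i hi
    rw [mem_range] at hi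
    omega
  have hmul : (intChoose x 4 : ZMod 5) * 24 = ∏ i ∈ range 4, ((x : ZMod 5) - i) := by
    exact_mod_cast congrArg (Int.cast : ℤ → ZMod 5) (Int.ediv_mul_cancel hdvd)
  generalize (intChoose x 4 : ZMod 5) = c, (x : ZMod 5) = y at hmul ⊢
  revert c y
  decide

lemma finite_support_rankCount (n : ℕ) : (Function.support fun m ↦ rankCount m n).Finite := by
  refine (Set.finite_Icc (-n : ℤ) n).subset fun m hm ↦ ?_
  obtain ⟨⟨p, rfl⟩, -⟩ := Nat.card_ne_zero.1 hm
  have := natAbs_partitionRank_le p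
  rw [Set.mem_Icc]
  omega

lemma hasSum_intChoose_mul_rankCount (n : ℕ) :
    HasSum (fun m : ℤ ↦ (intChoose (m + 1) 4 : ZMod 5) * rankCount m n) (eta4 n : ZMod 5) := by
  have hfin : (Function.support fun m : ℤ ↦ intChoose (m + 1) 4 * (rankCount m n : ℤ)).Finite :=
    (finite_support_rankCount n).subset fun m hm h ↦ hm (by simp [h])
  have hsum : HasSum (fun m : ℤ ↦ intChoose (m + 1) 4 * (rankCount m n : ℤ)) (eta4 n) :=
    (summable_of_hasFiniteSupport hfin).hasSum_iff.2 (tsum_eq_finsum hfin)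
  simpa [Function.comp_def] using hsum.map (Int.castAddHom (ZMod 5)) continuous_of_discreteTopology

lemma hasSum_rankSeries_five_mul_add_three :
    HasSum (fun j : ℤ ↦ rankSeries (ZMod 5) {5 * j + 3}) eta4Series := by
  refine (WithPiTopology.hasSum_iff_hasSum_coeff _).2 fun n ↦ ?_
  have hinj : Function.Injective fun j : ℤ ↦ 5 * j + 3 := fun i j h ↦ by dsimp at h; omega
  have hcast (m : ℤ) : ((m + 1 : ℤ) : ZMod 5) = 4 ↔ m ∈ Set.range fun j : ℤ ↦ 5 * j + 3 := by
    rw [show (4 : ZMod 5) = (4 : ℤ) from rfl, ZMod.intCast_eq_intCast_iff, Int.ModEq, Set.mem_range]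
    exact ⟨fun h ↦ ⟨m / 5, by omega⟩, fun ⟨j, hj⟩ ↦ by omega⟩
  have hsum := (hinj.hasSum_iff fun m hm ↦ by
    rw [intCast_intChoose_four, if_neg (mt (hcast m).1 hm), zero_mul]).2
    (hasSum_intChoose_mul_rankCount n)
  rw [eta4Series, coeff_mk]
  refine hsum.congr_fun fun j ↦ ?_
  rw [Function.comp_apply, intCast_intChoose_four, if_pos ((hcast _).2 ⟨j, rfl⟩), one_mul]
  simp only [rankSeries, coeff_mk]
  rfl

end RankMoment

section LambertTerms

/-- The triangular number `k(k + 1)/2` of an integer `k`. -/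
def tri (k : ℤ) : ℤ :=
  k * (k + 1) / 2

lemma two_mul_tri (k : ℤ) : 2 * tri k = k * (k + 1) :=
  Int.mul_ediv_cancel' (even_iff_two_dvd.1 (Int.even_mul_succ_self k))

lemma tri_add (k l : ℤ) : tri (k + l) = tri k + tri l + k * l := by
  linarith [two_mul_tri (k + l), two_mul_tri k, two_mul_tri l]

lemma tri_add_one (k : ℤ) : tri (k + 1) = tri k + k + 1 := by
  linarith [two_mul_tri (k + 1), two_mul_tri k]

lemma tri_nonneg (k : ℤ) : 0 ≤ tri k := by
  have : 0 ≤ k * (k + 1) := by rcases le_or_gt 0 k with h | h <;> nlinarith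
  linarith [two_mul_tri k]

lemma natAbs_le_tri_add_one (k : ℤ) : (k.natAbs : ℤ) ≤ tri k + 1 := by
  have hsq : 0 ≤ ((k.natAbs : ℤ) - 1) * (k.natAbs - 2) := by
    rcases le_or_gt k.natAbs 1 with h | h
    · exact mul_nonneg_of_nonpos_of_nonpos (by omega) (by omega)
    · exact mul_nonneg (by omega) (by omega)
  have := two_mul_tri k
  rcases k.natAbs_eq with h | h <;> nlinarith

variable {K : Type*} [Field K]

/-- The formal power series expansion of `qᵃ/(1 - qᵏ)` in `q = X`, which is that of
`-qᵃ⁻ᵏ/(1 - q⁻ᵏ)` when `k < 0`. It is only meaningful if the exponent `a`, respectively `a - k`, is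
nonnegative; it vanishes for `k = 0`. -/
noncomputable def lambertTerm (a k : ℤ) : K⟦X⟧ :=
  if 0 < k then X ^ a.toNat * (1 - X ^ k.toNat)⁻¹
  else -(X ^ (a - k).toNat * (1 - X ^ (-k).toNat)⁻¹)

lemma lambertTerm_zero_right (a : ℤ) : (lambertTerm a 0 : K⟦X⟧) = 0 := by
  simp [lambertTerm]

lemma X_pow_dvd_lambertTerm {a k : ℤ} {n : ℕ} (hpos : 0 < k → n ≤ a) (hneg : k ≤ 0 → n ≤ a - k) :
    X ^ n ∣ (lambertTerm a k : K⟦X⟧) := by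
  rw [lambertTerm]
  split_ifs with hk
  · exact (pow_dvd_pow X (by have := hpos hk; omega)).mul_right _
  · exact ((pow_dvd_pow X (by have := hneg (not_lt.1 hk); omega)).mul_right _).neg_right

lemma hasSum_X_pow_mul [TopologicalSpace K] [IsTopologicalRing K] [T2Space K] {n : ℕ} (hn : n ≠ 0) :
    HasSum (fun i : ℕ ↦ (X ^ (n * i) : K⟦X⟧)) (1 - X ^ n)⁻¹ := by
  have hconst : constantCoeff (X ^ n : K⟦X⟧) = 0 := by simp [hn]
  have hinv : constantCoeff (1 - X ^ n : K⟦X⟧) ≠ 0 := by simp [hn]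
  simp only [pow_mul]
  rw [← (PowerSeries.eq_inv_iff_mul_eq_one hinv).2
    (WithPiTopology.tsum_pow_mul_one_sub_of_constantCoeff_eq_zero hconst)]
  exact (WithPiTopology.summable_pow_of_constantCoeff_eq_zero hconst).hasSum

end LambertTerms

section RankMomentExpansion

instance fact_prime_five : Fact (Nat.Prime 5) :=
  ⟨Nat.prime_five⟩

/-- The `k`-th summand in the expansions of `(q; q)_∞` times the generating functions of the ranks
`5i + 3` and `-(5i + 2)`. Summed over `i` instead, it is a geometric series. -/
noncomputable def rankMomentTerm (i k : ℕ) : (ZMod 5)⟦X⟧ :=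
  (-1) ^ k * X ^ (pentagonal (k + 1)) * (1 - X ^ (k + 1)) *
    (X ^ ((k + 1) * (5 * i + 3)) + X ^ ((k + 1) * (5 * i + 2)))

lemma hasSum_rankMomentTerm_right (i : ℕ) : HasSum (rankMomentTerm i)
    (rankSeries (ZMod 5) {5 * (i : ℤ) + 3} * qPochInf X X +
      rankSeries (ZMod 5) {5 * (-(i + 1 : ℤ)) + 3} * qPochInf X X) := by
  have hpos := hasSum_rankSeries_singleton_mul (R := ZMod 5) (show 5 * (i : ℤ) + 3 ≠ 0 by omega)
  have hneg := hasSum_rankSeries_singleton_mul (R := ZMod 5)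
    (show 5 * (-(i + 1 : ℤ)) + 3 ≠ 0 by omega)
  rw [show (5 * (i : ℤ) + 3).natAbs = 5 * i + 3 by omega] at hpos
  rw [show (5 * (-(i + 1 : ℤ)) + 3).natAbs = 5 * i + 2 by omega] at hneg
  refine (hpos.add hneg).congr_fun fun k ↦ ?_
  rw [rankMomentTerm]
  ring

lemma hasSum_rankMomentTerm_left (k : ℕ) : HasSum (fun i ↦ rankMomentTerm i k)
    (-((-1) ^ (k + 1) * lambertTerm (3 * tri (k + 1)) (5 * (k + 1)) +
      (-1) ^ (k + 1) * lambertTerm (3 * tri (-(k + 1))) (5 * -(k + 1)))) := by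
  have hpent : 3 * tri (k + 1) = ((pentagonal (k + 1) + 2 * (k + 1) : ℕ) : ℤ) := by
    have := two_mul_tri (k + 1)
    have := two_mul_natCast_pentagonal (k + 1)
    push_cast
    linarith
  have hpent' : 3 * tri (-(k + 1)) - 5 * -(k + 1) =
      ((pentagonal (k + 1) + 4 * (k + 1) : ℕ) : ℤ) := by
    have := two_mul_tri (-(k + 1 : ℤ))
    have := two_mul_natCast_pentagonal (k + 1)
    push_cast
    linarith
  have hgeom := (hasSum_X_pow_mul (K := ZMod 5) (show 5 * (k + 1) ≠ 0 by omega)).mul_left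
    ((-1) ^ k * X ^ (pentagonal (k + 1) + 2 * (k + 1)) * (1 - X ^ (2 * (k + 1))))
  have hk : (5 * (k + 1 : ℤ)).toNat = 5 * (k + 1) := by omega
  have hk' : (-(5 * -(k + 1 : ℤ))).toNat = 5 * (k + 1) := by omega
  rw [lambertTerm, if_pos (by omega), lambertTerm, if_neg (by omega), hpent, hpent',
    hk, hk', Int.toNat_natCast, Int.toNat_natCast]
  have hsum := hgeom.congr_fun (g := fun i ↦ rankMomentTerm i k) fun i ↦ by
    rw [rankMomentTerm]
    ring
  refine Eq.subst (motive := fun g ↦ HasSum _ g) ?_ hsum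
  ring

lemma summable_rankMomentTerm : Summable fun x : ℕ × ℕ ↦ rankMomentTerm x.1 x.2 := by
  refine summable_of_finite_not_dvd fun L ↦ ((Set.finite_Iio L).prod (Set.finite_Iio L)).subset
    fun ⟨i, k⟩ hx ↦ ?_
  have hdvd : X ^ (i + k) ∣ rankMomentTerm i k := by
    rw [rankMomentTerm]
    exact (dvd_add (pow_dvd_pow X (by nlinarith)) (pow_dvd_pow X (by nlinarith))).mul_left _
  have hlt : i + k < L := not_le.1 fun hL ↦ hx ((pow_dvd_pow X hL).trans hdvd)
  exact ⟨Set.mem_Iio.2 (by omega), Set.mem_Iio.2 (by omega)⟩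

theorem hasSum_lambertTerm_eta4Series :
    HasSum (fun k : ℤ ↦ (k.negOnePow : (ZMod 5)⟦X⟧) * lambertTerm (3 * tri k) (5 * k))
      (-(eta4Series * qPochInf X X)) := by
  obtain ⟨g, hg⟩ := summable_rankMomentTerm
  have hrows := hg.prod_fiberwise hasSum_rankMomentTerm_right
  have hcols := ((Equiv.prodComm ℕ ℕ).hasSum_iff.2 hg).prod_fiberwise hasSum_rankMomentTerm_left
  have heta : g = eta4Series * qPochInf X X := hrows.unique
    (hasSum_rankSeries_five_mul_add_three.mul_right (qPochInf X X)).nat_add_neg_add_one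
  obtain ⟨S, hS⟩ := summable_int_of_dvd (R := ZMod 5)
    (u := fun k : ℤ ↦ (k.negOnePow : (ZMod 5)⟦X⟧) * lambertTerm (3 * tri k) (5 * k)) fun k ↦
      have htri := natAbs_le_tri_add_one k
      have hnonneg := tri_nonneg k
      (X_pow_dvd_lambertTerm (by omega) (by omega)).mul_left _
  suffices S = -g by rwa [← heta, ← this]
  have hfold := (hasSum_nat_add_iff' 1).2 hS.nat_add_neg
  simp only [sum_range_one, Nat.cast_zero, neg_zero, mul_zero, lambertTerm_zero_right, add_zero,
    sub_zero] at hfold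
  refine hfold.unique (hcols.neg.congr_fun fun k ↦ ?_)
  rw [neg_neg, Int.negOnePow_neg, Int.cast_negOnePow_natCast]
  push_cast
  rfl

end RankMomentExpansion

section GaussianBinomial

variable {A : Type*} [CommRing A] (q : A)

/-- The Gaussian binomial coefficient `[n, k]` in the variable `q`, given by its Pascal rule. -/
def gaussBinom : ℕ → ℕ → A
  | _, 0 => 1
  | 0, _ + 1 => 0
  | n + 1, k + 1 => gaussBinom n k + q ^ (k + 1) * gaussBinom n (k + 1)

@[simp] lemma gaussBinom_zero_right (n : ℕ) : gaussBinom q n 0 = 1 := by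
  cases n <;> rfl

lemma gaussBinom_succ_succ (n k : ℕ) :
    gaussBinom q (n + 1) (k + 1) = gaussBinom q n k + q ^ (k + 1) * gaussBinom q n (k + 1) :=
  rfl

lemma gaussBinom_eq_zero_of_lt {n k : ℕ} (h : n < k) : gaussBinom q n k = 0 := by
  induction n generalizing k with
  | zero => obtain _ | k := k <;> [omega; rfl]
  | succ n ih =>
    obtain _ | k := k
    · omega
    · rw [gaussBinom_succ_succ, ih (by omega), ih (by omega), mul_zero, add_zero]

lemma map_gaussBinom {B : Type*} [CommRing B] (φ : A →+* B) (n k : ℕ) :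
    φ (gaussBinom q n k) = gaussBinom (φ q) n k := by
  induction n generalizing k with
  | zero => cases k <;> simp [gaussBinom]
  | succ n ih => cases k <;> simp [gaussBinom_succ_succ, ih]

lemma gaussBinom_mul_qPoch_mul_qPoch (m k : ℕ) :
    gaussBinom q (m + k) k * (qPoch q q k * qPoch q q m) = qPoch q q (m + k) := by
  induction hn : m + k generalizing m k with
  | zero =>
    obtain ⟨rfl, rfl⟩ : m = 0 ∧ k = 0 := by omega
    simp
  | succ n ih =>
    obtain _ | k := k
    · simp [← hn]
    have hleft := ih m k (by omega)
    rw [gaussBinom_succ_succ, qPoch_succ q q n, qPoch_succ q q k]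
    obtain _ | m := m
    · obtain rfl : n = k := by omega
      rw [gaussBinom_eq_zero_of_lt q n.lt_succ_self]
      linear_combination (1 - q * q ^ n) * hleft
    · have hright := ih m (k + 1) (by omega)
      obtain rfl : n = m + k + 1 := by omega
      rw [qPoch_succ] at hleft hright ⊢
      linear_combination (1 - q * q ^ k) * hleft + q ^ (k + 1) * (1 - q * q ^ m) * hright

lemma add_mul_sum_gaussBinom {x y : A} {c d : ℕ → A} (hx : ∀ k, x * c k = d k * q ^ k)
    (hy : ∀ k, y * c k = d (k + 1)) (n : ℕ) :
    (x + y) * ∑ k ∈ range (n + 1), c k * gaussBinom q n k =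
      ∑ k ∈ range (n + 2), d k * gaussBinom q (n + 1) k := by
  have htop : ∑ k ∈ range (n + 1), d k * q ^ k * gaussBinom q n k =
      ∑ k ∈ range (n + 1), d (k + 1) * q ^ (k + 1) * gaussBinom q n (k + 1) + d 0 := by
    have hsum := sum_range_succ (fun k ↦ d k * q ^ k * gaussBinom q n k) (n + 1)
    rw [gaussBinom_eq_zero_of_lt q n.lt_succ_self, mul_zero, add_zero, sum_range_succ'] at hsum
    simpa using hsum.symm
  rw [sum_range_succ' _ (n + 1), add_mul, mul_sum, mul_sum]
  simp only [← mul_assoc, hx, hy, htop, gaussBinom_succ_succ, mul_add, sum_add_distrib,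
    gaussBinom_zero_right, mul_one]
  ring

lemma qPoch_eq_sum_gaussBinom (y : A) (n : ℕ) :
    qPoch y q n =
      ∑ k ∈ range (n + 1), (-1) ^ k * q ^ (tri (-k)).toNat * y ^ k * gaussBinom q n k := by
  induction n generalizing y with
  | zero => simp [tri]
  | succ n ih =>
    rw [qPoch_succ', ih, sub_eq_add_neg]
    refine add_mul_sum_gaussBinom q (fun k ↦ by ring) (fun k ↦ ?_) n
    have htri : (tri (-(k + 1 : ℕ))).toNat = (tri (-k)).toNat + k := by
      have hsucc := tri_add_one (-(k + 1))
      have hnonneg := tri_nonneg (-(k + 1))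
      have hnonneg' := tri_nonneg (-k)
      rw [show (-(k + 1) + 1 : ℤ) = -k by ring] at hsucc
      push_cast
      omega
    rw [htri]
    ring

theorem finite_jacobi_triple_product (y : A) (m n : ℕ) :
    (∏ i ∈ range m, (q ^ (i + 1) - y)) * qPoch y q n =
      ∑ k ∈ range (m + n + 1),
        (-1) ^ k * q ^ (tri (m - k)).toNat * y ^ k * gaussBinom q (m + n) k := by
  induction m with
  | zero => simpa using qPoch_eq_sum_gaussBinom q y n
  | succ m ih =>
    rw [prod_range_succ_comm, mul_assoc, ih, sub_eq_add_neg, Nat.add_right_comm m 1 n]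
    refine add_mul_sum_gaussBinom q (fun k ↦ ?_) (fun k ↦ ?_) (m + n)
    · have htri : m + 1 + (tri (m - k)).toNat = (tri ((m + 1 : ℕ) - k)).toNat + k := by
        have hsucc := tri_add_one (m - k)
        have hnonneg := tri_nonneg (m - k)
        have hnonneg' := tri_nonneg (m - k + 1)
        rw [show ((m + 1 : ℕ) - k : ℤ) = m - k + 1 by omega]
        omega
      have hpow := congrArg (q ^ ·) htri
      simp only [pow_add q _ k, pow_add q (m + 1)] at hpow
      linear_combination (-1) ^ k * y ^ k * hpow
    · rw [show ((m + 1 : ℕ) - (k + 1 : ℕ) : ℤ) = m - k by push_cast; ring]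
      ring

lemma prod_range_pow_succ_sub_one (n : ℕ) :
    ∏ i ∈ range n, (q ^ (i + 1) - 1) = (-1) ^ n * qPoch q q n := by
  rw [qPoch, ← card_range n, ← prod_const, card_range, ← prod_mul_distrib]
  exact prod_congr rfl fun i _ ↦ by ring

lemma snd_inlHom_mul_one_add_eps_pow (a : A) (k : ℕ) :
    TrivSqZeroExt.snd (TrivSqZeroExt.inlHom A A a * (1 + DualNumber.eps) ^ k) = a * k := by
  simp

/-- The derivative of the finite triple product at its simple zero `y = 1`, read off in the dual
numbers at `y = 1 + ε`. -/
lemma sum_natCast_mul_gaussBinom (n : ℕ) :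
    ∑ k ∈ range (2 * n + 2),
        (-1) ^ k * q ^ (tri (n - k)).toNat * (k : A) * gaussBinom q (2 * n + 1) k =
      -((-1) ^ n * qPoch q q n ^ 2) := by
  let ι := TrivSqZeroExt.inlHom A A
  let y : DualNumber A := 1 + DualNumber.eps
  let P := (∏ i ∈ range n, (ι q ^ (i + 1) - y)) * qPoch (y * ι q) (ι q) n
  have hP : TrivSqZeroExt.fst P = (-1) ^ n * qPoch q q n ^ 2 := by
    change TrivSqZeroExt.fstHom A A A P = _
    simp only [P, map_mul, map_prod, map_sub, map_pow, map_qPoch]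
    simp only [ι, y, TrivSqZeroExt.fstHom_apply, TrivSqZeroExt.inlHom_apply,
      TrivSqZeroExt.fst_inl, TrivSqZeroExt.fst_add, TrivSqZeroExt.fst_one, DualNumber.fst_eps,
      add_zero, one_mul, prod_range_pow_succ_sub_one]
    ring
  have hfin := finite_jacobi_triple_product (ι q) y n (n + 1)
  rw [qPoch_succ', show (∏ i ∈ range n, (ι q ^ (i + 1) - y)) *
    ((1 - y) * qPoch (y * ι q) (ι q) n) = -(P * DualNumber.eps) by ring] at hfin
  have hterm (k : ℕ) : TrivSqZeroExt.snd ((-1) ^ k * ι q ^ (tri (n - k)).toNat * y ^ k *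
      gaussBinom (ι q) (n + (n + 1)) k) =
        (-1) ^ k * q ^ (tri (n - k)).toNat * k * gaussBinom q (2 * n + 1) k := by
    have hscalar : (-1) ^ k * ι q ^ (tri (n - k)).toNat * y ^ k * gaussBinom (ι q) (n + (n + 1)) k =
        ι ((-1) ^ k * q ^ (tri (n - k)).toNat * gaussBinom q (2 * n + 1) k) * y ^ k := by
      simp only [map_mul, map_pow, map_neg, map_one, map_gaussBinom, ← add_assoc, ← two_mul]
      ring
    rw [hscalar, snd_inlHom_mul_one_add_eps_pow]
    ring
  have hsnd := congrArg TrivSqZeroExt.snd hfin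
  rw [TrivSqZeroExt.snd_neg, DualNumber.snd_mul, TrivSqZeroExt.snd_sum, hP] at hsnd
  simp only [hterm, DualNumber.fst_eps, DualNumber.snd_eps, mul_one, mul_zero, add_zero] at hsnd
  rw [show 2 * n + 2 = n + (n + 1) + 1 by ring]
  exact hsnd.symm

lemma finite_jacobi_cube (n : ℕ) :
    qPoch q q n ^ 2 = ∑ k ∈ range (2 * n + 2), ((n - k : ℤ).negOnePow : A) * ((n - k : ℤ) : A) *
      q ^ (tri (n - k)).toNat * gaussBinom q (2 * n + 1) k := by
  have hzero := finite_jacobi_triple_product q 1 n (n + 1)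
  have hderiv := sum_natCast_mul_gaussBinom q n
  have hsign : ((-1) ^ n * (-1) ^ n : A) = 1 := by rw [← mul_pow, neg_one_mul, neg_neg, one_pow]
  rw [qPoch_succ', sub_self, zero_mul, mul_zero, ← add_assoc, ← two_mul] at hzero
  calc qPoch q q n ^ 2
    _ = (-1) ^ n * n * 0 - (-1) ^ n * -((-1) ^ n * qPoch q q n ^ 2) := by
      linear_combination (-qPoch q q n ^ 2) * hsign
    _ = _ := by
      rw [← hderiv, hzero, mul_sum, mul_sum, ← sum_sub_distrib]
      refine sum_congr rfl fun k _ ↦ ?_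
      rw [Int.negOnePow_sub, Units.val_mul, Int.cast_mul, Int.cast_negOnePow_natCast,
        Int.cast_negOnePow_natCast]
      push_cast
      ring

lemma natAbs_le_tripleProduct_exponent {c c' : ℕ} (hc : 0 < c) (hc' : 0 < c') (j : ℤ) :
    (j.natAbs : ℤ) ≤ (c + c') * tri j - c * j := by
  have hnonneg := tri_nonneg j
  have hnonneg' : 0 ≤ tri j - j := by
    have := tri_nonneg (j - 1)
    have := tri_add_one (j - 1)
    rw [sub_add_cancel] at this
    omega
  calc (j.natAbs : ℤ)
    _ ≤ (tri j - j) + tri j := by omega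
    _ ≤ c * (tri j - j) + c' * tri j := by
      gcongr
      · exact le_mul_of_one_le_left hnonneg' (by exact_mod_cast hc)
      · exact le_mul_of_one_le_left hnonneg (by exact_mod_cast hc')
    _ = (c + c') * tri j - c * j := by ring

lemma finite_jacobi_triple_product_X_pow {R : Type*} [CommRing R] {c c' : ℕ} (hc : 0 < c)
    (hc' : 0 < c') (n : ℕ) :
    qPoch (X ^ c' : R⟦X⟧) (X ^ (c + c')) n * qPoch (X ^ c) (X ^ (c + c')) (n + 1) =
      ∑ k ∈ range (2 * n + 2), ((n - k : ℤ).negOnePow : R⟦X⟧) *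
        X ^ ((c + c') * tri (n - k) - c * (n - k)).toNat *
          gaussBinom (X ^ (c + c')) (2 * n + 1) k := by
  have hprod : ∏ i ∈ range n, (((X : R⟦X⟧) ^ (c + c')) ^ (i + 1) - X ^ c) =
      (-1) ^ n * X ^ (c * n) * qPoch (X ^ c') (X ^ (c + c')) n := by
    rw [qPoch, pow_mul, ← mul_pow, ← card_range n, ← prod_const, card_range, ← prod_mul_distrib]
    exact prod_congr rfl fun i _ ↦ by ring
  have hfin := finite_jacobi_triple_product ((X : R⟦X⟧) ^ (c + c')) (X ^ c) n (n + 1)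
  rw [hprod, ← add_assoc, ← two_mul] at hfin
  refine X_pow_mul_cancel (k := c * n) ?_
  have hsign : ((-1) ^ n * (-1) ^ n : R⟦X⟧) = 1 := by rw [← mul_pow, neg_one_mul, neg_neg, one_pow]
  have hclear : X ^ (c * n) * (qPoch (X ^ c' : R⟦X⟧) (X ^ (c + c')) n *
      qPoch (X ^ c) (X ^ (c + c')) (n + 1)) = (-1) ^ n * ((-1) ^ n * X ^ (c * n) *
        qPoch (X ^ c') (X ^ (c + c')) n * qPoch (X ^ c) (X ^ (c + c')) (n + 1)) := by
    linear_combination (-(X ^ (c * n) * qPoch (X ^ c' : R⟦X⟧) (X ^ (c + c')) n *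
      qPoch (X ^ c) (X ^ (c + c')) (n + 1))) * hsign
  rw [hclear, hfin, mul_sum, mul_sum]
  refine sum_congr rfl fun k _ ↦ ?_
  have hexp : (c + c') * (tri (n - k)).toNat + c * k =
      c * n + ((c + c') * tri (n - k) - c * (n - k)).toNat := by
    zify
    rw [Int.toNat_of_nonneg (tri_nonneg _), Int.toNat_of_nonneg
      ((Int.natCast_nonneg _).trans (natAbs_le_tripleProduct_exponent hc hc' _))]
    ring
  rw [Int.negOnePow_sub, Units.val_mul, Int.cast_mul, Int.cast_negOnePow_natCast,
    Int.cast_negOnePow_natCast, ← pow_mul, ← pow_mul]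
  have hpow := congrArg ((X : R⟦X⟧) ^ ·) hexp
  simp only [pow_add X] at hpow
  linear_combination (-1) ^ n * (-1) ^ k * gaussBinom (X ^ (c + c')) (2 * n + 1) k * hpow

end GaussianBinomial

section TripleProduct

variable {R : Type*} [CommRing R] [TopologicalSpace R] [T2Space R] {q f : R⟦X⟧}

lemma qPochInf_mul_gaussBinom_smodEq (hq : X ∣ q) {m k L : ℕ} (hm : L ≤ m) (hk : L ≤ k) :
    qPochInf q q * gaussBinom q (m + k) k ≡ 1 [SMOD powIdeal R L] := by
  have hpoch {n : ℕ} (hn : L ≤ n) : qPoch q q n ≡ qPochInf q q [SMOD powIdeal R L] :=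
    (qPochInf_smodEq hq q n).symm.mono (powIdeal_anti hn)
  have hunit : IsUnit (qPochInf q q) := by
    rw [isUnit_iff_constantCoeff, constantCoeff_qPochInf (X_dvd_iff.1 hq) hq]
    exact isUnit_one
  obtain ⟨v, hv⟩ := hunit.exists_right_inv
  have hpascal := gaussBinom_mul_qPoch_mul_qPoch q m k
  calc qPochInf q q * gaussBinom q (m + k) k
    _ = v * (gaussBinom q (m + k) k * (qPochInf q q * qPochInf q q)) := by
      linear_combination -(gaussBinom q (m + k) k * qPochInf q q) * hv
    _ ≡ v * (gaussBinom q (m + k) k * (qPoch q q k * qPoch q q m)) [SMOD powIdeal R L] :=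
      SModEq.rfl.mul (SModEq.rfl.mul ((hpoch hk).mul (hpoch hm)).symm)
    _ = v * qPoch q q (m + k) := by rw [hpascal]
    _ ≡ v * qPochInf q q [SMOD powIdeal R L] := SModEq.rfl.mul (hpoch (by omega))
    _ = 1 := by rw [mul_comm, hv]

lemma hasSum_int_of_gaussBinom (hq : X ∣ q) {u : ℤ → R⟦X⟧}
    (hu : ∀ j : ℤ, X ^ (j.natAbs - 1) ∣ u j)
    (hf : ∀ n : ℕ, f ≡ ∑ k ∈ range (2 * n + 2), u (n - k) * gaussBinom q (2 * n + 1) k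
      [SMOD powIdeal R n]) : HasSum u (qPochInf q q * f) := by
  refine hasSum_int_of_smodEq hu fun n ↦ ?_
  calc qPochInf q q * f
    _ ≡ qPochInf q q * ∑ k ∈ range (2 * n + 2), u (n - k) * gaussBinom q (2 * n + 1) k
        [SMOD powIdeal R (n - 1)] := SModEq.rfl.mul ((hf n).mono (powIdeal_anti (by omega)))
    _ = ∑ k ∈ range (2 * n + 2), u (n - k) * (qPochInf q q * gaussBinom q (2 * n + 1) k) := by
      rw [mul_sum]
      exact sum_congr rfl fun k _ ↦ by ring
    _ ≡ ∑ k ∈ range (2 * n + 2), u (n - k) * 1 [SMOD powIdeal R (n - 1)] := by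
      refine SModEq.sum fun k hk ↦ ?_
      rw [mem_range] at hk
      have hgauss := qPochInf_mul_gaussBinom_smodEq hq (min_le_left (2 * n + 1 - k) k)
        (min_le_right (2 * n + 1 - k) k)
      rw [Nat.sub_add_cancel (by omega)] at hgauss
      exact (mul_smodEq_mul_of_dvd (hu _) hgauss).mono (powIdeal_anti (by omega))
    _ = ∑ j ∈ Ico (-(n + 1 : ℕ) : ℤ) (n + 1 : ℕ), u j := by
      simp only [mul_one]
      refine sum_nbij' (fun k ↦ n - k) (fun j ↦ (n - j).toNat) ?_ ?_ ?_ ?_ ?_ <;>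
        intro k hk <;> simp only [mem_range, mem_Ico] at hk ⊢ <;> omega

/-- The theta product `(q^(c + c'), q^c', q^c; q^(c + c'))_∞`. -/
noncomputable def thetaSeries (c c' : ℕ) : R⟦X⟧ :=
  qPochInf (X ^ (c + c')) (X ^ (c + c')) *
    (qPochInf (X ^ c') (X ^ (c + c')) * qPochInf (X ^ c) (X ^ (c + c')))

theorem hasSum_jacobi_triple_product {c c' : ℕ} (hc : 0 < c) (hc' : 0 < c') :
    HasSum (fun j : ℤ ↦ (j.negOnePow : R⟦X⟧) * X ^ ((c + c') * tri j - c * j).toNat)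
      (thetaSeries c c') := by
  have hq : (X : R⟦X⟧) ∣ X ^ (c + c') := dvd_pow_self X (by omega)
  refine hasSum_int_of_gaussBinom hq (fun j ↦ ?_) fun n ↦ ?_
  · have hle := natAbs_le_tripleProduct_exponent hc hc' j
    exact (pow_dvd_pow X (by omega)).mul_left _
  · rw [← finite_jacobi_triple_product_X_pow hc hc']
    exact (qPochInf_smodEq hq _ n).mul
      ((qPochInf_smodEq hq _ (n + 1)).mono (powIdeal_anti n.le_succ))

theorem hasSum_jacobi_cube :
    HasSum (fun j : ℤ ↦ (j.negOnePow : R⟦X⟧) * (j : R⟦X⟧) * X ^ (tri j).toNat)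
      (qPochInf X X ^ 3) := by
  rw [pow_succ']
  refine hasSum_int_of_gaussBinom (dvd_refl X) (fun j ↦ ?_) fun n ↦ ?_
  · exact (pow_dvd_pow X (by have := natAbs_le_tri_add_one j; omega)).mul_left _
  · rw [← finite_jacobi_cube X n]
    have hmod := qPochInf_smodEq (R := R) (dvd_refl X) X n
    rw [pow_two, pow_two]
    exact hmod.mul hmod

end TripleProduct

section PartialFractions

variable {F : Type*} [Field F]

lemma one_eq_prod_mul_sum_partialFraction {ι : Type*} [DecidableEq ι] {s : Finset ι} {x : ι → F}
    (hinj : Set.InjOn x s) (hzero : ∀ i ∈ s, x i ≠ 0) (hone : ∀ i ∈ s, x i ≠ 1) {M : ℕ}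
    (hM : M < #s) :
    1 = (∏ i ∈ s, (1 - x i)) * ∑ i ∈ s, x i ^ (M + 1 - #s : ℤ) * (1 - x i)⁻¹ *
      (∏ j ∈ s.erase i, (1 - x j / x i))⁻¹ := by
  have hinterp := congrArg (Polynomial.eval 1)
    (Lagrange.eq_interpolate (f := (Polynomial.X : Polynomial F) ^ M) hinj
      (by rw [Polynomial.degree_X_pow]; exact_mod_cast hM))
  rw [Lagrange.eval_interpolate_not_at_node _ fun i hi ↦ (hone i hi).symm,
    Lagrange.eval_nodal] at hinterp
  simp only [Polynomial.eval_pow, Polynomial.eval_X, one_pow, Lagrange.nodalWeight] at hinterp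
  refine hinterp.trans (congrArg _ (sum_congr rfl fun i hi ↦ ?_))
  have hnode : ∏ j ∈ s.erase i, (x i - x j) =
      x i ^ (#s - 1 : ℤ) * ∏ j ∈ s.erase i, (1 - x j / x i) := by
    rw [← Nat.cast_pred (by omega), ← card_erase_of_mem hi, zpow_natCast, ← prod_const,
      ← prod_mul_distrib]
    refine prod_congr rfl fun j _ ↦ ?_
    rw [mul_sub, mul_one, mul_div_cancel₀ _ (hzero i hi)]
  rw [prod_inv_distrib, hnode, mul_inv, ← zpow_neg, mul_right_comm,
    show (M + 1 - #s : ℤ) = -(#s - 1) + M by ring, zpow_add₀ (hzero i hi), zpow_natCast]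
  ring

lemma prod_Ico_neg_natCast {M : Type*} [CommMonoid M] (f : ℤ → M) (m u : ℕ) :
    ∏ l ∈ Ico (-m : ℤ) u, f l = (∏ t ∈ range m, f (-(t + 1))) * ∏ t ∈ range u, f t := by
  induction m with
  | zero =>
    have himage : Ico (-(0 : ℕ) : ℤ) u = (range u).image (↑) := by
      ext l
      simp only [Nat.cast_zero, neg_zero, mem_Ico, mem_image, mem_range]
      exact ⟨fun h ↦ ⟨l.toNat, by omega, by omega⟩, by rintro ⟨t, ht, rfl⟩; omega⟩
    rw [himage, prod_image Nat.cast_injective.injOn, prod_range_zero, one_mul]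
  | succ m ih =>
    have hinsert : Ico (-(m + 1 : ℕ) : ℤ) u = insert (-(m + 1) : ℤ) (Ico (-m : ℤ) u) := by
      ext l
      simp only [mem_insert, mem_Ico]
      omega
    rw [hinsert, prod_insert (by simp), ih, prod_range_succ]
    ac_rfl

lemma prod_Ico_neg_natCast_erase_zero {M : Type*} [CommMonoid M] (f : ℤ → M) (m u : ℕ) :
    ∏ l ∈ (Ico (-m : ℤ) (u + 1 : ℕ)).erase 0, f l =
      (∏ t ∈ range m, f (-(t + 1))) * ∏ t ∈ range u, f (t + 1) := by
  have hupdate := prod_Ico_neg_natCast (Function.update f 0 1) m (u + 1)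
  rw [prod_update_of_mem (by simp), one_mul, sdiff_singleton_eq_erase] at hupdate
  rw [hupdate, prod_range_succ']
  simp only [Nat.cast_zero, Function.update_self, mul_one]
  refine congrArg₂ _ (prod_congr rfl fun t _ ↦ ?_) (prod_congr rfl fun t _ ↦ ?_) <;>
    exact Function.update_of_ne (by omega) _ _

lemma prod_range_one_sub_mul_zpow_neg {x Q : F} (hx : x ≠ 0) (hQ : Q ≠ 0) (m : ℕ) :
    ∏ t ∈ range m, (1 - x * Q ^ (-(t + 1) : ℤ)) =
      (-x) ^ m * Q ^ (-tri m) * qPoch (Q / x) Q m := by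
  induction m with
  | zero => simp [tri]
  | succ m ih =>
    have htri : -tri (m + 1 : ℕ) = -tri m + -(m + 1 : ℤ) := by
      rw [Nat.cast_succ, tri_add_one]
      ring
    rw [prod_range_succ, ih, qPoch_succ, htri, zpow_add₀ hQ, zpow_neg, zpow_neg _ (m + 1 : ℤ),
      ← Nat.cast_succ, zpow_natCast, Nat.succ_eq_add_one]
    field_simp
    ring

lemma prod_Ico_one_sub_mul_zpow {x Q : F} (hx : x ≠ 0) (hQ : Q ≠ 0) (m u : ℕ) :
    ∏ l ∈ Ico (-m : ℤ) u, (1 - x * Q ^ l) =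
      (-x) ^ m * Q ^ (-tri m) * (qPoch (Q / x) Q m * qPoch x Q u) := by
  rw [prod_Ico_neg_natCast, prod_range_one_sub_mul_zpow_neg hx hQ, mul_assoc]
  simp only [qPoch, zpow_natCast]

lemma prod_Ico_erase_zero_one_sub_zpow {Q : F} (hQ : Q ≠ 0) (m u : ℕ) :
    ∏ l ∈ (Ico (-m : ℤ) (u + 1 : ℕ)).erase 0, (1 - Q ^ l) =
      (-1) ^ m * Q ^ (-tri m) * (qPoch Q Q m * qPoch Q Q u) := by
  have hneg := prod_range_one_sub_mul_zpow_neg one_ne_zero hQ m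
  simp only [one_mul, div_one] at hneg
  rw [prod_Ico_neg_natCast_erase_zero, hneg, mul_assoc]
  simp only [qPoch, ← Nat.cast_succ, zpow_natCast, pow_succ']

variable {ι : Type*} [Fintype ι] {b : ι → F} {Q : F}

lemma prod_neg_pow_mul_node_zpow_div (hb : ∀ i, b i ≠ 0) (hQ : Q ≠ 0) {n m : ℕ} (i : ι) {j : ℤ}
    (hm : (m : ℤ) = n + j) :
    (∏ i', -b i') ^ n * (Q ^ (-tri n)) ^ Fintype.card ι *
        (b i * Q ^ j) ^ (-(Fintype.card ι * n) : ℤ) /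
        ((∏ i', -(b i' / b i)) ^ m * (Q ^ (-tri m)) ^ Fintype.card ι) =
      (∏ i', -(b i' / b i)) ^ (-j) * (Q ^ tri j) ^ Fintype.card ι := by
  set s := Fintype.card ι with hs
  set c := ∏ i', -(b i' / b i) with hc
  have hc0 : c ≠ 0 := prod_ne_zero_iff.2 fun i' _ ↦ neg_ne_zero.2 (div_ne_zero (hb i') (hb i))
  have hB : ∏ i', -b i' = c * b i ^ s := by
    rw [hc, hs, ← card_univ, ← prod_const, ← prod_mul_distrib]
    exact prod_congr rfl fun i' _ ↦ by rw [neg_mul, div_mul_cancel₀ _ (hb i)]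
  have hbi := hb i
  rw [hB]
  simp only [← zpow_natCast, hm, tri_add, mul_zpow, ← zpow_mul]
  simp only [add_mul, neg_mul, mul_neg, zpow_neg, zpow_add₀ hQ, zpow_add₀ hc0,
    show j * (s * n) = n * j * s by ring]
  field_simp

variable [DecidableEq ι]

lemma prod_erase_one_sub_node_div (hb : ∀ i, b i ≠ 0) (hQ : Q ≠ 0) {n : ℕ} (i : ι) {j : ℤ}
    {m u : ℕ} (hm : (m : ℤ) = n + j) (hu : ((u + 1 : ℕ) : ℤ) = n - j) :
    ∏ x ∈ (univ ×ˢ Ico (-n : ℤ) n).erase (i, j), (1 - b x.1 * Q ^ x.2 / (b i * Q ^ j)) =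
      (∏ l ∈ (Ico (-m : ℤ) (u + 1 : ℕ)).erase 0, (1 - Q ^ l)) *
        ∏ i' ∈ univ.erase i, ∏ l ∈ Ico (-m : ℤ) (u + 1 : ℕ), (1 - b i' / b i * Q ^ l) := by
  have hratio (i' : ι) (l : ℤ) : b i' * Q ^ l / (b i * Q ^ j) = b i' / b i * Q ^ (l - j) := by
    rw [zpow_sub₀ hQ, mul_div_mul_comm]
  have hnodes : (univ ×ˢ Ico (-n : ℤ) n).erase (i, j) =
      ({i} ×ˢ (Ico (-n : ℤ) n).erase j) ∪ (univ.erase i ×ˢ Ico (-n : ℤ) n) := by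
    ext ⟨i', l⟩
    simp only [mem_erase, mem_product, mem_union, mem_singleton, mem_univ, ne_eq, Prod.mk.injEq]
    by_cases hi : i' = i <;> simp [hi]
  have hdisj : Disjoint ({i} ×ˢ (Ico (-n : ℤ) n).erase j) (univ.erase i ×ˢ Ico (-n : ℤ) n) :=
    disjoint_product.2 (.inl (disjoint_singleton_left.2 (notMem_erase i univ)))
  rw [hnodes, prod_union hdisj, prod_product, prod_product, prod_singleton]
  simp only [hratio, div_self (hb i), one_mul]
  refine congrArg₂ _ (prod_equiv (Equiv.subRight j) (fun l ↦ ?_) fun l _ ↦ rfl)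
    (prod_congr rfl fun i' _ ↦ prod_equiv (Equiv.subRight j) (fun l ↦ ?_) fun l _ ↦ rfl) <;>
  · simp only [mem_erase, mem_Ico, Equiv.subRight_apply]
    omega

/-- The denominator of the residue at the node `b i * Q ^ j` in the partial fraction expansion
with nodes `b i' * Q ^ j'` for `-n ≤ j' < n`, where `m = n + j` and `u = n - j - 1`. -/
noncomputable def residueDenom (b : ι → F) (Q : F) (i : ι) (m u : ℕ) : F :=
  qPoch Q Q m * qPoch Q Q u *
    ∏ i' ∈ univ.erase i, (qPoch (Q * b i / b i') Q m * qPoch (b i' / b i) Q (u + 1))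

lemma prod_erase_one_sub_node_div_eq_mul_residueDenom (hb : ∀ i, b i ≠ 0) (hQ : Q ≠ 0) {n : ℕ}
    (i : ι) {j : ℤ} {m u : ℕ} (hm : (m : ℤ) = n + j)
    (hu : ((u + 1 : ℕ) : ℤ) = n - j) :
    ∏ x ∈ (univ ×ˢ Ico (-n : ℤ) n).erase (i, j), (1 - b x.1 * Q ^ x.2 / (b i * Q ^ j)) =
      (∏ i', -(b i' / b i)) ^ m * (Q ^ (-tri m)) ^ Fintype.card ι * residueDenom b Q i m u := by
  have hprod (i' : ι) : ∏ l ∈ Ico (-m : ℤ) (u + 1 : ℕ), (1 - b i' / b i * Q ^ l) =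
      (-(b i' / b i)) ^ m * Q ^ (-tri m) *
        (qPoch (Q * b i / b i') Q m * qPoch (b i' / b i) Q (u + 1)) := by
    rw [prod_Ico_one_sub_mul_zpow (div_ne_zero (hb i') (hb i)) hQ, div_div_eq_mul_div]
  have hself : (-1 : F) ^ m * Q ^ (-tri m) = (-(b i / b i)) ^ m * Q ^ (-tri m) := by
    rw [div_self (hb i)]
  rw [prod_erase_one_sub_node_div hb hQ i hm hu, prod_Ico_erase_zero_one_sub_zpow hQ, hself,
    residueDenom, prod_congr rfl fun i' _ ↦ hprod i', prod_mul_distrib, ← mul_assoc,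
    mul_right_comm (_ * _) (_ * _),
    mul_prod_erase univ (fun i' ↦ (-(b i' / b i)) ^ m * Q ^ (-tri m)) (mem_univ i),
    prod_mul_distrib, prod_pow, prod_const, card_univ]
  ring

lemma one_eq_prod_qPoch_mul_sum_residueDenom [Nonempty ι] (hb : ∀ i, b i ≠ 0) (hQ : Q ≠ 0)
    (hinj : Function.Injective fun x : ι × ℤ ↦ b x.1 * Q ^ x.2)
    (hone : ∀ i (j : ℤ), b i * Q ^ j ≠ 1) {n : ℕ} (hn : 0 < n) :
    1 = (∏ i, (qPoch (Q / b i) Q n * qPoch (b i) Q n)) * ∑ i, ∑ j ∈ Ico (-n : ℤ) n,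
      (∏ i', -(b i' / b i)) ^ (-j) * (Q ^ tri j) ^ Fintype.card ι * (1 - b i * Q ^ j)⁻¹ *
        (residueDenom b Q i (n + j).toNat (n - j - 1).toNat)⁻¹ := by
  set s := Fintype.card ι
  have hcard : #(univ ×ˢ Ico (-n : ℤ) n : Finset (ι × ℤ)) = 2 * (s * n) := by
    rw [card_product, card_univ, Int.card_Ico, show ((n : ℤ) - -n).toNat = 2 * n by omega]
    ring
  have hspos : 0 < s * n := mul_pos Fintype.card_pos hn
  have hpf := one_eq_prod_mul_sum_partialFraction (s := univ ×ˢ Ico (-n : ℤ) n) (M := s * n - 1)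
    hinj.injOn (fun x _ ↦ mul_ne_zero (hb x.1) (zpow_ne_zero _ hQ)) (fun x _ ↦ hone x.1 x.2)
    (by rw [hcard]; omega)
  have houter : ∏ x ∈ univ ×ˢ Ico (-n : ℤ) n, (1 - b x.1 * Q ^ x.2) =
      (∏ i, -b i) ^ n * (Q ^ (-tri n)) ^ s *
        ∏ i, (qPoch (Q / b i) Q n * qPoch (b i) Q n) := by
    rw [prod_product, prod_congr rfl fun i _ ↦ prod_Ico_one_sub_mul_zpow (hb i) hQ n n,
      prod_mul_distrib, prod_mul_distrib, prod_pow, prod_const, card_univ]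
  refine hpf.trans ?_
  rw [houter, mul_comm (_ * _ : F) (∏ i, _), mul_assoc, mul_sum, sum_product]
  refine congrArg _ (sum_congr rfl fun i _ ↦ sum_congr rfl fun j hj ↦ ?_)
  have hj' := mem_Ico.1 hj
  rw [prod_erase_one_sub_node_div_eq_mul_residueDenom hb hQ i (m := (n + j).toNat)
    (u := (n - j - 1).toNat) (by omega) (by omega),
    ← prod_neg_pow_mul_node_zpow_div hb hQ (n := n) (m := (n + j).toNat) i (by omega),
    show ((s * n - 1 : ℕ) + 1 - #(univ ×ˢ Ico (-n : ℤ) n : Finset (ι × ℤ)) : ℤ) = -(s * n) by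
      rw [hcard]; push_cast [hspos]; ring]
  simp only [div_eq_mul_inv, mul_inv]
  ring

end PartialFractions

section AppellSeries

variable {K : Type*} [Field K]

section FractionField

variable {F : Type*} [Field F] {φ : K⟦X⟧ →+* F}

lemma map_inv_of_constantCoeff_ne_zero (φ : K⟦X⟧ →+* F) {f : K⟦X⟧} (hf : constantCoeff f ≠ 0) :
    φ f⁻¹ = (φ f)⁻¹ :=
  eq_inv_of_mul_eq_one_left (by rw [← map_mul, PowerSeries.inv_mul_cancel f hf, map_one])

lemma map_X_ne_zero (hφ : Function.Injective φ) : φ X ≠ 0 :=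
  (map_ne_zero_iff φ hφ).2 X_ne_zero

lemma map_X_zpow_injective (hφ : Function.Injective φ) :
    Function.Injective fun k : ℤ ↦ φ X ^ k := by
  have hone (n : ℕ) (h : φ X ^ n = 1) : n = 0 := by
    rw [← map_pow, ← map_one φ] at h
    by_contra hn
    simpa [hn] using congrArg constantCoeff (hφ h)
  intro k l hkl
  have hdiff : φ X ^ (k - l) = 1 := by
    rw [zpow_sub₀ (map_X_ne_zero hφ), div_eq_one_iff_eq (zpow_ne_zero _ (map_X_ne_zero hφ))]
    exact hkl
  rcases (k - l).natAbs_eq with h | h <;> rw [h] at hdiff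
  · have := hone _ (by rwa [zpow_natCast] at hdiff)
    omega
  · have := hone _ (by rwa [zpow_neg, inv_eq_one, zpow_natCast] at hdiff)
    omega

lemma map_lambertTerm (hφ : Function.Injective φ) {a k : ℤ} (hk : k ≠ 0) (hpos : 0 < k → 0 ≤ a)
    (hneg : k < 0 → 0 ≤ a - k) : φ (lambertTerm a k) = φ X ^ a * (1 - φ X ^ k)⁻¹ := by
  have hinv {n : ℕ} (hn : n ≠ 0) : φ (1 - X ^ n)⁻¹ = (1 - φ X ^ n)⁻¹ := by
    rw [map_inv_of_constantCoeff_ne_zero φ (by simp [hn]), map_sub, map_one, map_pow]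
  have hX := map_X_ne_zero hφ
  rw [lambertTerm]
  split_ifs with h
  · rw [map_mul, map_pow, hinv (by omega), ← zpow_natCast, ← zpow_natCast,
      Int.toNat_of_nonneg (hpos h), Int.toNat_of_nonneg h.le]
  · have hk' : k < 0 := by omega
    have hne : 1 - φ X ^ k ≠ 0 := sub_ne_zero.2 fun h1 ↦
      hk (map_X_zpow_injective hφ (by simpa using h1.symm))
    rw [map_neg, map_mul, map_pow, hinv (by omega), ← zpow_natCast, ← zpow_natCast,
      Int.toNat_of_nonneg (hneg hk'), Int.toNat_of_nonneg (by omega), zpow_sub₀ hX, zpow_neg]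
    have hne' : φ X ^ k - 1 ≠ 0 := by rwa [← neg_ne_zero, neg_sub]
    field_simp
    ring

end FractionField

lemma qPoch_mul_qPoch_inv {F : Type*} [Field F] {y : F} (hy : y ≠ 0) (Q : F) (m u : ℕ) :
    qPoch (Q * y) Q m * qPoch y⁻¹ Q (u + 1) =
      -y⁻¹ * (qPoch y Q (m + 1) * qPoch (Q * y⁻¹) Q u) := by
  rw [qPoch_succ' y⁻¹, qPoch_succ' y, mul_comm y Q, mul_comm y⁻¹ Q]
  field_simp
  ring

/-- The partial theta product `(q^c; q⁵)ₘ(q^c'; q⁵)ᵤ`. -/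
noncomputable def thetaProd (c c' m u : ℕ) : K⟦X⟧ :=
  qPoch (X ^ c) (X ^ 5) m * qPoch (X ^ c') (X ^ 5) u

lemma constantCoeff_thetaProd {c c' : ℕ} (hc : c ≠ 0) (hc' : c' ≠ 0) (m u : ℕ) :
    constantCoeff (thetaProd c c' m u : K⟦X⟧) = 1 := by
  rw [thetaProd, map_mul, constantCoeff_qPoch (by simp [hc]), constantCoeff_qPoch (by simp [hc']),
    one_mul]

/-- The denominators, up to powers of `q`, of the residues at `q^(5j + 1)`, `q^(5j + 2)` and
`q^(5j + 3)` in the partial fraction expansion with nodes `q, q², q³` and base `q⁵`, cleared of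
negative powers of `q`; see `residueDenom`. -/
noncomputable def thetaDenom (m u : ℕ) : Fin 3 → K⟦X⟧ :=
  ![thetaProd 5 5 m u * thetaProd 4 1 m (u + 1) * thetaProd 3 2 m (u + 1),
    thetaProd 5 5 m u * thetaProd 1 4 (m + 1) u * thetaProd 4 1 m (u + 1),
    thetaProd 5 5 m u * thetaProd 2 3 (m + 1) u * thetaProd 1 4 (m + 1) u]

lemma constantCoeff_thetaDenom (m u : ℕ) (i : Fin 3) :
    constantCoeff (thetaDenom m u i : K⟦X⟧) = 1 := by
  fin_cases i <;> simp [thetaDenom, constantCoeff_thetaProd]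

/-- The `j`-th summand of `appellSeries r c`. -/
noncomputable def appellTerm (r c j : ℤ) : K⟦X⟧ :=
  (j.negOnePow : K⟦X⟧) * lambertTerm (15 * tri j + 3 * (r - 2) * j + c) (5 * j + r)

lemma natAbs_le_appellTerm_exponent_of_pos {r c j : ℤ} (hr : 0 ≤ r) (hr' : r ≤ 4) (hc : 0 ≤ c)
    (hk : 0 < 5 * j + r) : j.natAbs ≤ 15 * tri j + 3 * (r - 2) * j + c := by
  have := two_mul_tri j
  have hj : 0 ≤ j := by omega
  rw [Int.natAbs_of_nonneg hj]
  nlinarith [mul_nonneg hr hj]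

lemma natAbs_le_appellTerm_exponent_of_nonpos {r c j : ℤ} (hr : 0 ≤ r) (hr' : r ≤ 4) (hc : 0 ≤ c)
    (hrc : 4 * r ≤ c + 10) (hk : 5 * j + r ≤ 0) :
    j.natAbs ≤ 15 * tri j + 3 * (r - 2) * j + c - (5 * j + r) := by
  have := two_mul_tri j
  have hj : j ≤ 0 := by omega
  rw [Int.ofNat_natAbs_of_nonpos hj]
  rcases (show j = 0 ∨ j = -1 ∨ j ≤ -2 by omega) with rfl | rfl | hj2
  · linarith
  · linarith
  · nlinarith [mul_nonneg (sub_nonneg.2 hr') (neg_nonneg.2 hj)]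

lemma X_pow_natAbs_dvd_appellTerm {r c : ℤ} (hr : 0 ≤ r) (hr' : r ≤ 4) (hc : 0 ≤ c)
    (hrc : 4 * r ≤ c + 10) (j : ℤ) : X ^ j.natAbs ∣ (appellTerm r c j : K⟦X⟧) :=
  (X_pow_dvd_lambertTerm (natAbs_le_appellTerm_exponent_of_pos hr hr' hc)
    (natAbs_le_appellTerm_exponent_of_nonpos hr hr' hc hrc)).mul_left _

/-- The numerators, up to the same powers of `q` as in `thetaDenom`, of the residues at
`q^(5j + 1)`, `q^(5j + 2)` and `q^(5j + 3)`. -/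
noncomputable def appellNumer (j : ℤ) : Fin 3 → K⟦X⟧ :=
  ![appellTerm 1 0 j, -(X * appellTerm 2 0 j), appellTerm 3 3 j]

section FractionField

variable {F : Type*} [Field F] {φ : K⟦X⟧ →+* F}

lemma map_thetaProd (φ : K⟦X⟧ →+* F) (c c' m u : ℕ) : φ (thetaProd c c' m u) =
    qPoch (φ X ^ c) (φ X ^ 5) m * qPoch (φ X ^ c') (φ X ^ 5) u := by
  simp only [thetaProd, map_mul, map_qPoch, map_pow]

lemma residueDenom_eq_mul_map_thetaDenom (hφ : Function.Injective φ) (m u : ℕ) (i : Fin 3) :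
    residueDenom (fun i : Fin 3 ↦ φ X ^ (i + 1 : ℕ)) (φ X ^ 5) i m u =
      ![1, -(φ X)⁻¹, (φ X ^ 3)⁻¹] i * φ (thetaDenom m u i) := by
  have hX := map_X_ne_zero hφ
  have hone := qPoch_mul_qPoch_inv hX (φ X ^ 5) m u
  have htwo := qPoch_mul_qPoch_inv (pow_ne_zero 2 hX) (φ X ^ 5) m u
  rw [residueDenom]
  field_simp at hone htwo
  fin_cases i
  · rw [show univ.erase (⟨0, by omega⟩ : Fin 3) = {1, 2} from rfl, prod_pair (by decide)]
    simp only [thetaDenom, map_mul, map_thetaProd, Fin.coe_ofNat_eq_mod, Nat.one_mod, Nat.mod_succ,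
      Nat.reduceAdd, zero_add, pow_one, Fin.zero_eta, Matrix.cons_val_zero, one_mul]
    field_simp
  · rw [show univ.erase (⟨1, by omega⟩ : Fin 3) = {0, 2} from rfl, prod_pair (by decide)]
    simp only [thetaDenom, map_mul, map_thetaProd, Fin.coe_ofNat_eq_mod, Nat.zero_mod, Nat.mod_succ,
      Nat.reduceAdd, zero_add, pow_one, Fin.mk_one, Matrix.cons_val_one, Matrix.cons_val_zero,
      neg_mul]
    field_simp
    linear_combination (qPoch (φ X ^ 5) (φ X ^ 5) m * qPoch (φ X ^ 5) (φ X ^ 5) u *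
      qPoch (φ X ^ 4) (φ X ^ 5) m * qPoch (φ X) (φ X ^ 5) (u + 1)) * hone
  · rw [show univ.erase (⟨2, by omega⟩ : Fin 3) = {0, 1} from rfl, prod_pair (by decide)]
    simp only [thetaDenom, map_mul, map_thetaProd, Fin.coe_ofNat_eq_mod, Nat.zero_mod, Nat.one_mod,
      Nat.reduceAdd, zero_add, pow_one, Fin.reduceFinMk, Matrix.cons_val]
    field_simp
    linear_combination (qPoch (φ X ^ 5) (φ X ^ 5) m * qPoch (φ X ^ 5) (φ X ^ 5) u) *
      (htwo * φ X * qPoch (φ X ^ 6) (φ X ^ 5) m * qPoch (1 / φ X) (φ X ^ 5) (u + 1) -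
        qPoch (φ X ^ 2) (φ X ^ 5) (m + 1) * qPoch (φ X ^ 3) (φ X ^ 5) u * hone)

lemma map_appellTerm (hφ : Function.Injective φ) {r c : ℤ} (hr : 0 < r) (hr' : r ≤ 4) (hc : 0 ≤ c)
    (hrc : 4 * r ≤ c + 10) (j : ℤ) : φ (appellTerm r c j) =
      (j.negOnePow : F) * φ X ^ (15 * tri j + 3 * (r - 2) * j + c) * (1 - φ X ^ (5 * j + r))⁻¹ := by
  have hpos (hk : 0 < 5 * j + r) := natAbs_le_appellTerm_exponent_of_pos hr.le hr' hc hk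
  have hneg (hk : 5 * j + r < 0) := natAbs_le_appellTerm_exponent_of_nonpos hr.le hr' hc hrc hk.le
  rw [appellTerm, map_mul, map_intCast, map_lambertTerm hφ (by omega)
    (fun hk ↦ (Int.natCast_nonneg _).trans (hpos hk))
    fun hk ↦ (Int.natCast_nonneg _).trans (hneg hk), ← mul_assoc]

lemma map_X_pow_mul_zpow (hφ : Function.Injective φ) (i : ℕ) (j : ℤ) :
    φ X ^ i * (φ X ^ 5) ^ j = φ X ^ (5 * j + i) := by
  rw [zpow_add₀ (map_X_ne_zero hφ), zpow_mul, mul_comm]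
  norm_cast

lemma residueNumer_eq_zpow (hφ : Function.Injective φ) (j : ℤ) (i : ℕ) :
    (∏ i' : Fin 3, -(φ X ^ (i' + 1 : ℕ) / φ X ^ i)) ^ (-j) * ((φ X ^ 5) ^ tri j) ^ 3 =
      (j.negOnePow : F) * φ X ^ (15 * tri j + 3 * (i - 2) * j) := by
  have hX := map_X_ne_zero hφ
  have hprod : ∏ i' : Fin 3, -(φ X ^ (i' + 1 : ℕ) / φ X ^ i) = -1 * φ X ^ (6 - 3 * i : ℤ) := by
    rw [Fin.prod_univ_three, zpow_sub₀ hX, mul_comm 3, zpow_mul, zpow_natCast, zpow_ofNat,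
      zpow_ofNat]
    simp only [Fin.val_zero, Fin.val_one, Fin.val_two]
    ring
  have hsign : (-1 : F) ^ (-j) = (j.negOnePow : F) := by
    rw [Int.cast_negOnePow, zpow_neg, ← inv_zpow, inv_neg_one]
  rw [hprod, mul_zpow, hsign, ← zpow_natCast _ 5, ← zpow_natCast _ 3, ← zpow_mul, ← zpow_mul,
    ← zpow_mul, mul_assoc, ← zpow_add₀ hX]
  congr 2
  push_cast
  ring

lemma residueNumer_eq_mul_map_appellNumer (hφ : Function.Injective φ) (j : ℤ) (i : Fin 3) :
    (∏ i' : Fin 3, -(φ X ^ (i' + 1 : ℕ) / φ X ^ (i + 1 : ℕ))) ^ (-j) * ((φ X ^ 5) ^ tri j) ^ 3 *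
        (1 - φ X ^ (i + 1 : ℕ) * (φ X ^ 5) ^ j)⁻¹ =
      ![1, -(φ X)⁻¹, (φ X ^ 3)⁻¹] i * φ (appellNumer j i) := by
  have hX := map_X_ne_zero hφ
  rw [residueNumer_eq_zpow hφ, map_X_pow_mul_zpow hφ]
  fin_cases i
  · simp [appellNumer, map_appellTerm hφ]
  · simp [appellNumer, map_appellTerm hφ, hX]
  · simp only [appellNumer, map_appellTerm hφ, zpow_add₀ hX _ 3, zpow_ofNat, Nat.reduceAdd,
      Nat.cast_ofNat, Int.reduceSub, Int.reduceMul, Int.reduceAdd, Int.reduceLE, mul_one,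
      Nat.ofNat_pos, Nat.ofNat_nonneg, Fin.reduceFinMk, Matrix.cons_val]
    field_simp

lemma residue_eq_map_appellNumer_mul_inv (hφ : Function.Injective φ) (j : ℤ) (m u : ℕ) (i : Fin 3) :
    (∏ i' : Fin 3, -(φ X ^ (i' + 1 : ℕ) / φ X ^ (i + 1 : ℕ))) ^ (-j) * ((φ X ^ 5) ^ tri j) ^ 3 *
        (1 - φ X ^ (i + 1 : ℕ) * (φ X ^ 5) ^ j)⁻¹ *
        (residueDenom (fun i : Fin 3 ↦ φ X ^ (i + 1 : ℕ)) (φ X ^ 5) i m u)⁻¹ =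
      φ (appellNumer j i * (thetaDenom m u i)⁻¹) := by
  have hcoeff : ![1, -(φ X)⁻¹, (φ X ^ 3)⁻¹] i ≠ 0 := by
    have hX := map_X_ne_zero hφ
    fin_cases i <;> simp [hX]
  rw [residueNumer_eq_mul_map_appellNumer hφ, residueDenom_eq_mul_map_thetaDenom hφ, map_mul,
    map_inv_of_constantCoeff_ne_zero φ (by simp [constantCoeff_thetaDenom]), ← div_eq_mul_inv,
    mul_div_mul_left _ _ hcoeff, div_eq_mul_inv]

lemma prod_qPoch_eq_map_thetaProd (hφ : Function.Injective φ) (n : ℕ) :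
    ∏ i : Fin 3, (qPoch (φ X ^ 5 / φ X ^ (i + 1 : ℕ)) (φ X ^ 5) n *
        qPoch (φ X ^ (i + 1 : ℕ)) (φ X ^ 5) n) =
      φ (thetaProd 4 1 n n * thetaProd 3 2 n n * thetaProd 2 3 n n) := by
  have hdiv (i : Fin 3) : φ X ^ 5 / φ X ^ (i + 1 : ℕ) = φ X ^ (4 - i : ℕ) := by
    rw [div_eq_mul_inv, ← pow_sub₀ _ (map_X_ne_zero hφ) (by omega), Nat.add_comm, ← Nat.sub_sub]
  simp only [Fin.prod_univ_three, map_mul, map_thetaProd, hdiv]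
  rfl

end FractionField

lemma one_eq_thetaProd_mul_sum_appellNumer {n : ℕ} (hn : 0 < n) :
    (1 : K⟦X⟧) = thetaProd 4 1 n n * thetaProd 3 2 n n * thetaProd 2 3 n n *
      ∑ i, ∑ j ∈ Ico (-n : ℤ) n,
        appellNumer j i * (thetaDenom (n + j).toNat (n - j - 1).toNat i)⁻¹ := by
  set φ := algebraMap K⟦X⟧ (FractionRing K⟦X⟧)
  have hφ : Function.Injective φ := IsFractionRing.injective _ _
  have hX := map_X_ne_zero hφ
  have hpf := one_eq_prod_qPoch_mul_sum_residueDenom (b := fun i : Fin 3 ↦ φ X ^ (i + 1 : ℕ))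
    (Q := φ X ^ 5) (fun i ↦ pow_ne_zero _ hX) (pow_ne_zero 5 hX) ?_ ?_ hn
  · simp only [Fintype.card_fin, residue_eq_map_appellNumer_mul_inv hφ,
      prod_qPoch_eq_map_thetaProd hφ, ← map_sum, ← map_mul] at hpf
    exact hφ ((map_one φ).trans hpf)
  · rintro ⟨i, j⟩ ⟨i', j'⟩ h
    simp only [map_X_pow_mul_zpow hφ] at h
    have := map_X_zpow_injective hφ h
    ext <;> simp <;> omega
  · intro i j h
    rw [map_X_pow_mul_zpow hφ] at h
    have := map_X_zpow_injective hφ (h.trans (zpow_zero _).symm)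
    omega

end AppellSeries

section AppellLimit

variable {K : Type*} [Field K]

lemma inv_smodEq_inv {f g : K⟦X⟧} {L : ℕ} (hf : constantCoeff f ≠ 0) (hg : constantCoeff g ≠ 0)
    (h : f ≡ g [SMOD powIdeal K L]) : f⁻¹ ≡ g⁻¹ [SMOD powIdeal K L] := by
  rw [smodEq_powIdeal_iff_dvd] at h ⊢
  have hsub : f⁻¹ - g⁻¹ = -(f⁻¹ * g⁻¹) * (f - g) := by
    linear_combination g⁻¹ * PowerSeries.inv_mul_cancel f hf -
      f⁻¹ * PowerSeries.inv_mul_cancel g hg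
  rw [hsub]
  exact h.mul_left _

variable [TopologicalSpace K]

/-- The Appell-type series `∑ⱼ (-1)ʲ q^(15j(j + 1)/2 + 3(r - 2)j + c) / (1 - q^(5j + r))`. -/
noncomputable def appellSeries (r c : ℤ) : K⟦X⟧ :=
  ∑' j : ℤ, appellTerm r c j

lemma hasSum_appellSeries {r c : ℤ} (hr : 0 ≤ r) (hr' : r ≤ 4) (hc : 0 ≤ c)
    (hrc : 4 * r ≤ c + 10) : HasSum (appellTerm r c : ℤ → K⟦X⟧) (appellSeries r c) :=
  (summable_int_of_dvd fun j ↦ (pow_dvd_pow X (Nat.sub_le _ 1)).trans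
    (X_pow_natAbs_dvd_appellTerm hr hr' hc hrc j)).hasSum

variable [T2Space K]

lemma sum_appellTerm_mul_inv_smodEq {r c : ℤ} (hr : 0 ≤ r) (hr' : r ≤ 4) (hc : 0 ≤ c)
    (hrc : 4 * r ≤ c + 10) {D : K⟦X⟧} {d : ℕ → ℕ → K⟦X⟧} (hd : ∀ m u, constantCoeff (d m u) ≠ 0)
    (hD : constantCoeff D ≠ 0) (hdD : ∀ {L m u}, L ≤ m → L ≤ u → d m u ≡ D [SMOD powIdeal K L])
    (n : ℕ) :
    ∑ j ∈ Ico (-n : ℤ) n, appellTerm r c j * (d (n + j).toNat (n - j - 1).toNat)⁻¹ ≡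
      appellSeries r c * D⁻¹ [SMOD powIdeal K (n - 1)] := by
  have hdvd := X_pow_natAbs_dvd_appellTerm (K := K) hr hr' hc hrc
  have hterm (j : ℤ) (hj : j ∈ Ico (-n : ℤ) n) :
      appellTerm r c j * (d (n + j).toNat (n - j - 1).toNat)⁻¹ ≡ appellTerm r c j * D⁻¹
        [SMOD powIdeal K (n - 1)] := by
    rw [mem_Ico] at hj
    have hlimit : d (n + j).toNat (n - j - 1).toNat ≡ D [SMOD powIdeal K (n - 1 - j.natAbs)] :=
      hdD (by omega) (by omega)
    exact (mul_smodEq_mul_of_dvd (hdvd j) (inv_smodEq_inv (hd _ _) hD hlimit)).mono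
      (powIdeal_anti (by omega))
  refine (SModEq.sum hterm).trans ?_
  rw [← sum_mul]
  exact (smodEq_sum_Ico_of_hasSum (hasSum_appellSeries hr hr' hc hrc)
    (fun j ↦ (pow_dvd_pow X (Nat.sub_le _ 1)).trans (hdvd j)) n).symm.mul SModEq.rfl

/-- The infinite product `(q^c; q⁵)_∞(q^c'; q⁵)_∞`, the limit of `thetaProd c c' m u`. -/
noncomputable def thetaProdInf (c c' : ℕ) : K⟦X⟧ :=
  qPochInf (X ^ c) (X ^ 5) * qPochInf (X ^ c') (X ^ 5)

lemma thetaProd_smodEq (c c' : ℕ) {L m u : ℕ} (hm : L ≤ m) (hu : L ≤ u) :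
    thetaProd c c' m u ≡ thetaProdInf c c' [SMOD powIdeal K L] :=
  have hX : (X : K⟦X⟧) ∣ X ^ 5 := dvd_pow_self X (by norm_num)
  ((qPochInf_smodEq hX _ m).mono (powIdeal_anti hm)).symm.mul
    ((qPochInf_smodEq hX _ u).mono (powIdeal_anti hu)).symm

lemma constantCoeff_thetaProdInf {c c' : ℕ} (hc : c ≠ 0) (hc' : c' ≠ 0) :
    constantCoeff (thetaProdInf c c' : K⟦X⟧) = 1 := by
  have hX : (X : K⟦X⟧) ∣ X ^ 5 := dvd_pow_self X (by norm_num)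
  rw [thetaProdInf, map_mul, constantCoeff_qPochInf (by simp [hc]) hX,
    constantCoeff_qPochInf (by simp [hc']) hX, one_mul]

lemma one_eq_thetaProdInf_mul_appellSeries :
    (1 : K⟦X⟧) = thetaProdInf 4 1 * thetaProdInf 3 2 * thetaProdInf 2 3 *
      (appellSeries 1 0 * (thetaProdInf 5 5 * thetaProdInf 4 1 * thetaProdInf 3 2)⁻¹ +
        -(X * (appellSeries 2 0 * (thetaProdInf 5 5 * thetaProdInf 1 4 * thetaProdInf 4 1)⁻¹)) +
        appellSeries 3 3 * (thetaProdInf 5 5 * thetaProdInf 2 3 * thetaProdInf 1 4)⁻¹) := by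
  refine eq_of_forall_smodEq fun L ↦ ?_
  rw [one_eq_thetaProd_mul_sum_appellNumer L.succ_pos]
  simp only [Fin.sum_univ_three, appellNumer, thetaDenom, Matrix.cons_val, neg_mul, mul_assoc X,
    sum_neg_distrib, ← mul_sum]
  have hlim (c c' : ℕ) {L m u : ℕ} (hm : L ≤ m) (hu : L ≤ u) :
      thetaProd c c' m u ≡ thetaProdInf c c' [SMOD powIdeal K L] := thetaProd_smodEq c c' hm hu
  have hL {c c' : ℕ} := hlim c c' L.le_succ L.le_succ
  refine ((hL.mul hL).mul hL).mul (SModEq.add (SModEq.add ?_ (SModEq.neg (SModEq.rfl.mul ?_))) ?_)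
  · exact sum_appellTerm_mul_inv_smodEq (d := fun m u ↦ thetaProd 5 5 m u *
      thetaProd 4 1 m (u + 1) * thetaProd 3 2 m (u + 1)) (by norm_num) (by norm_num) le_rfl
      (by norm_num) (by simp [constantCoeff_thetaProd]) (by simp [constantCoeff_thetaProdInf])
      (fun hm hu ↦ ((hlim 5 5 hm hu).mul (hlim 4 1 hm (by omega))).mul
        (hlim 3 2 hm (by omega))) (L + 1)
  · exact sum_appellTerm_mul_inv_smodEq (d := fun m u ↦ thetaProd 5 5 m u *
      thetaProd 1 4 (m + 1) u * thetaProd 4 1 m (u + 1)) (by norm_num) (by norm_num) le_rfl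
      (by norm_num) (by simp [constantCoeff_thetaProd]) (by simp [constantCoeff_thetaProdInf])
      (fun hm hu ↦ ((hlim 5 5 hm hu).mul (hlim 1 4 (by omega) hu)).mul
        (hlim 4 1 hm (by omega))) (L + 1)
  · exact sum_appellTerm_mul_inv_smodEq (d := fun m u ↦ thetaProd 5 5 m u *
      thetaProd 2 3 (m + 1) u * thetaProd 1 4 (m + 1) u) (by norm_num) (by norm_num)
      (by norm_num) (by norm_num) (by simp [constantCoeff_thetaProd])
      (by simp [constantCoeff_thetaProdInf])
      (fun hm hu ↦ ((hlim 5 5 hm hu).mul (hlim 2 3 (by omega) hu)).mul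
        (hlim 1 4 (by omega) hu)) (L + 1)

theorem qPochInf_pow_mul_thetaSeries_eq_appellSeries :
    (qPochInf (X ^ 5) (X ^ 5) ^ 3 * thetaSeries 1 4 : K⟦X⟧) =
      thetaSeries 1 4 * thetaSeries 2 3 * (appellSeries 1 0 + appellSeries 3 3) -
        X * thetaSeries 2 3 ^ 2 * appellSeries 2 0 := by
  have hcancel {c c' : ℕ} (hc : c ≠ 0) (hc' : c' ≠ 0) :
      (thetaProdInf c c' : K⟦X⟧) * (thetaProdInf c c')⁻¹ = 1 :=
    PowerSeries.mul_inv_cancel _ (by simp [constantCoeff_thetaProdInf hc hc'])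
  have h14 : (thetaSeries 1 4 : K⟦X⟧) = qPochInf (X ^ 5) (X ^ 5) * thetaProdInf 4 1 := rfl
  have h23 : (thetaSeries 2 3 : K⟦X⟧) = qPochInf (X ^ 5) (X ^ 5) * thetaProdInf 3 2 := rfl
  have h55 : (thetaProdInf 5 5 : K⟦X⟧) = qPochInf (X ^ 5) (X ^ 5) ^ 2 := (sq _).symm
  have hcomm (c c' : ℕ) : (thetaProdInf c c' : K⟦X⟧) = thetaProdInf c' c := mul_comm _ _
  have hone := one_eq_thetaProdInf_mul_appellSeries (K := K)
  have h1 := hcancel four_ne_zero one_ne_zero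
  have h2 := hcancel three_ne_zero two_ne_zero
  have h5 := hcancel (c := 5) (c' := 5) (by norm_num) (by norm_num)
  simp only [PowerSeries.mul_inv_rev, hcomm 1 4, hcomm 2 3] at hone
  rw [h14, h23]
  rw [h55] at hone h5
  set a : K⟦X⟧ := thetaProdInf 4 1
  set b : K⟦X⟧ := thetaProdInf 3 2
  set e : K⟦X⟧ := qPochInf (X ^ 5) (X ^ 5)
  have hcleared : e ^ 2 * a =
      a * b * (appellSeries 1 0 + appellSeries 3 3) - X * b ^ 2 * appellSeries 2 0 :=
    calc e ^ 2 * a = e ^ 2 * a * 1 := by ring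
      _ = e ^ 2 * (e ^ 2)⁻¹ * ((a * a⁻¹) * (b * b⁻¹) * (a * b) *
            (appellSeries 1 0 + appellSeries 3 3) -
              X * b ^ 2 * appellSeries 2 0 * (a * a⁻¹) ^ 2) := by rw [hone]; ring
      _ = _ := by rw [h1, h2, h5]; ring
  linear_combination e ^ 2 * hcleared

end AppellLimit

section ResidueParts

lemma expand_zmod {p : ℕ} [Fact p.Prime] (hp : p ≠ 0) (f : (ZMod p)⟦X⟧) :
    expand p hp f = f ^ p := by
  rw [← MvPowerSeries.map_frobenius_expand p hp, ZMod.frobenius_zmod, MvPowerSeries.map_id]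
  rfl

variable {R : Type*} [CommRing R] {p : ℕ} {r : ℕ}

/-- The series `∑ₙ a(pn + r)Xⁿ` formed from the coefficients of `f = ∑ₙ a(n)Xⁿ` whose index lies in
one residue class modulo `p`. -/
noncomputable def residuePart (p r : ℕ) (f : R⟦X⟧) : R⟦X⟧ :=
  PowerSeries.mk fun n ↦ coeff (p * n + r) f

lemma coeff_residuePart (f : R⟦X⟧) (n : ℕ) :
    coeff n (residuePart p r f) = coeff (p * n + r) f :=
  coeff_mk _ _

lemma residuePart_sum {ι : Type*} (s : Finset ι) (f : ι → R⟦X⟧) :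
    residuePart p r (∑ i ∈ s, f i) = ∑ i ∈ s, residuePart p r (f i) := by
  ext n
  simp only [coeff_residuePart, map_sum]

lemma residuePart_X_pow_mul_expand (hp : p ≠ 0) {s : ℕ} (hr : r < p) (hs : s < p) (f : R⟦X⟧) :
    residuePart p r (X ^ s * expand p hp f) = if s = r then f else 0 := by
  ext n
  rw [coeff_residuePart, coeff_X_pow_mul', coeff_expand]
  by_cases hsr : s = r
  · rw [if_pos (by omega), hsr, Nat.add_sub_cancel, if_pos (dvd_mul_right p n),
      Nat.mul_div_cancel_left n (by omega), if_pos rfl]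
  · rw [if_neg hsr, map_zero, ite_eq_right_iff]
    refine fun hle ↦ if_neg fun hdvd ↦ hsr ?_
    have hmod : s ≡ p * n + r [MOD p] := (Nat.modEq_iff_dvd' hle).2 hdvd
    simpa [Nat.ModEq, Nat.mod_eq_of_lt hs, Nat.mod_eq_of_lt hr] using hmod

lemma residuePart_sum_X_pow_mul_expand (hp : p ≠ 0) (a : Fin p → R⟦X⟧) (r : Fin p) :
    residuePart p r (∑ s : Fin p, X ^ (s : ℕ) * expand p hp (a s)) = a r := by
  simp only [residuePart_sum, residuePart_X_pow_mul_expand hp r.isLt (Fin.isLt _), Fin.val_inj,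
    sum_ite_eq', mem_univ, if_true]

lemma sum_X_pow_mul_expand_residuePart (hp : p ≠ 0) (f : R⟦X⟧) :
    ∑ s : Fin p, X ^ (s : ℕ) * expand p hp (residuePart p s f) = f := by
  ext n
  have hpart := residuePart_sum_X_pow_mul_expand hp (fun s ↦ residuePart p s f)
    ⟨n % p, n.mod_lt (by omega)⟩
  simpa only [coeff_residuePart, Nat.div_add_mod] using congrArg (coeff (n / p)) hpart

lemma residuePart_mul_expand (hp : p ≠ 0) (hr : r < p) (f g : R⟦X⟧) :
    residuePart p r (f * expand p hp g) = residuePart p r f * g := by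
  have hpart := residuePart_sum_X_pow_mul_expand hp (fun s ↦ residuePart p s f * g) ⟨r, hr⟩
  simpa only [map_mul, ← mul_assoc, ← sum_mul, sum_X_pow_mul_expand_residuePart] using hpart

lemma sum_X_pow_mul_expand_injective (hp : p ≠ 0) :
    Function.Injective fun a : Fin p → R⟦X⟧ ↦
      ∑ s : Fin p, X ^ (s : ℕ) * expand p hp (a s) := by
  intro a b hab
  ext1 r
  rw [← residuePart_sum_X_pow_mul_expand hp a r, ← residuePart_sum_X_pow_mul_expand hp b r]
  exact congrArg (residuePart p r) hab

end ResidueParts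

section Dissections

/-- The substitution `q ↦ q⁵`. -/
noncomputable abbrev expandFive {R : Type*} [CommRing R] : R⟦X⟧ →ₐ[R] R⟦X⟧ :=
  expand 5 (by norm_num)

lemma negOnePow_five_mul_add (j r : ℤ) :
    (5 * j + r).negOnePow = j.negOnePow * r.negOnePow := by
  rw [← Int.negOnePow_add, Int.negOnePow_eq_iff]
  exact ⟨2 * j, by ring⟩

section Pentagonal

variable {R : Type*} [CommRing R]

lemma pentagonal_emod_five (k : ℤ) :
    pentagonal k % 5 = 0 ∨ pentagonal k % 5 = 2 ∨ pentagonal k % 5 = 1 ∧ k % 5 = 1 := by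
  have hpent := two_mul_natCast_pentagonal k
  obtain ⟨j, r, hr, hr', rfl⟩ : ∃ j r : ℤ, 0 ≤ r ∧ r < 5 ∧ k = 5 * j + r :=
    ⟨k / 5, k % 5, by omega, by omega, by omega⟩
  have hsq : (5 * j + r) * (3 * (5 * j + r) - 1) =
      5 * (15 * (j * j) + 6 * (j * r) - j) + r * (3 * r - 1) := by ring
  interval_cases r <;> omega

lemma pentagonal_five_mul_add_one (j : ℤ) :
    pentagonal (5 * j + 1) = 5 * (5 * pentagonal (-j)) + 1 := by
  have h := two_mul_natCast_pentagonal (5 * j + 1)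
  have h' := two_mul_natCast_pentagonal (-j)
  zify
  linarith

lemma residuePart_five_pentagonalSeries_eq_zero {r : ℕ} (h : r = 3 ∨ r = 4) :
    residuePart 5 r (pentagonalSeries R) = 0 := by
  ext n
  rw [coeff_residuePart, map_zero]
  refine coeff_pentagonalSeries_eq_zero R ?_
  rintro ⟨k, hk⟩
  have := pentagonal_emod_five k
  omega

lemma residuePart_five_one_pentagonalSeries :
    residuePart 5 1 (pentagonalSeries R) = -expandFive (pentagonalSeries R) := by
  ext n
  rw [coeff_residuePart, map_neg, coeff_expand]
  by_cases hn : 5 * n + 1 ∈ Set.range pentagonal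
  · obtain ⟨k, hk⟩ := hn
    have hmod := pentagonal_emod_five k
    obtain ⟨j, rfl⟩ : ∃ j : ℤ, k = 5 * j + 1 := ⟨k / 5, by omega⟩
    have hn : n = 5 * pentagonal (-j) := by
      have := pentagonal_five_mul_add_one j
      omega
    rw [← hk, coeff_pentagonalSeries_pentagonal, hn, if_pos (dvd_mul_right _ _),
      Nat.mul_div_cancel_left _ (by norm_num), coeff_pentagonalSeries_pentagonal,
      negOnePow_five_mul_add, Int.negOnePow_neg]
    simp
  · rw [coeff_pentagonalSeries_eq_zero R hn, eq_comm, neg_eq_zero, ite_eq_right_iff]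
    rintro ⟨m, rfl⟩
    rw [Nat.mul_div_cancel_left _ (by norm_num)]
    refine coeff_pentagonalSeries_eq_zero R fun ⟨j, hj⟩ ↦ hn ⟨5 * -j + 1, ?_⟩
    rw [pentagonal_five_mul_add_one, neg_neg, hj]

end Pentagonal

section JacobiCube

lemma five_eq_zero : (5 : (ZMod 5)⟦X⟧) = 0 := by
  rw [← map_ofNat C 5, show (OfNat.ofNat 5 : ZMod 5) = 0 from rfl, map_zero]

variable {R : Type*} [CommRing R] [TopologicalSpace R]

lemma tri_mul_add {d r : ℕ} (hr : r ≤ d) (j : ℤ) : tri ((2 * d + 1) * j + r) =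
    tri r + (2 * d + 1) * (((d - r : ℕ) + (d + 1 + r : ℕ)) * tri j - (d - r : ℕ) * j) := by
  refine mul_left_cancel₀ (two_ne_zero (α := ℤ)) ?_
  push_cast [Nat.cast_sub hr]
  linear_combination two_mul_tri ((2 * d + 1) * j + r) - two_mul_tri r -
    (2 * d + 1) ^ 2 * two_mul_tri j

lemma hasSum_X_pow_tri_mul_add [IsTopologicalRing R] [T2Space R] {d r : ℕ} (hr : r < d) :
    HasSum (fun j : ℤ ↦ (j.negOnePow : R⟦X⟧) * X ^ (tri ((2 * d + 1) * j + r)).toNat)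
      (X ^ (tri r).toNat * expand (2 * d + 1) (by omega) (thetaSeries (d - r) (d + 1 + r))) := by
  have hc : 0 < d - r := by omega
  have hc' : 0 < d + 1 + r := by omega
  have htheta := (hasSum_expand (show 2 * d + 1 ≠ 0 by omega) (hasSum_jacobi_triple_product (R := R)
    hc hc')).mul_left (X ^ (tri r).toNat)
  refine htheta.congr_fun fun j ↦ ?_
  have hnonneg := (Nat.cast_nonneg _).trans (natAbs_le_tripleProduct_exponent hc hc' j)
  rw [tri_mul_add hr.le, Int.toNat_add (tri_nonneg r) (by positivity), Int.toNat_mul (by positivity)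
    hnonneg, show (2 * (d : ℤ) + 1).toNat = 2 * d + 1 by omega, map_mul, map_intCast, map_pow,
    expand_X, ← pow_mul, pow_add]
  ring

lemma hasSum_X_pow_tri_reflect {p r : ℤ} {f : R⟦X⟧} [IsTopologicalRing R]
    (h : HasSum (fun j : ℤ ↦ (j.negOnePow : R⟦X⟧) * X ^ (tri (p * j + r)).toNat) f) :
    HasSum (fun j : ℤ ↦ (j.negOnePow : R⟦X⟧) * X ^ (tri (p * j + (p - 1 - r))).toNat) (-f) := by
  refine ((Equiv.subLeft (-1 : ℤ)).hasSum_iff.2 h).neg.congr_fun fun j ↦ ?_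
  have htri : tri (p * (-1 - j) + r) = tri (p * j + (p - 1 - r)) := by
    linarith [two_mul_tri (p * (-1 - j) + r), two_mul_tri (p * j + (p - 1 - r))]
  have hsign : ((-1 - j).negOnePow : R⟦X⟧) = -(j.negOnePow : R⟦X⟧) := by
    rw [Int.negOnePow_sub]
    simp
  rw [Function.comp_apply, Equiv.subLeft_apply, htri, hsign, neg_mul, neg_neg]

lemma hasSum_X_pow_tri_five_mul_add_two :
    HasSum (fun j : ℤ ↦ (j.negOnePow : (ZMod 5)⟦X⟧) * X ^ (tri (5 * j + 2)).toNat) 0 := by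
  obtain ⟨f, hf⟩ := summable_int_of_dvd (R := ZMod 5)
    (u := fun j : ℤ ↦ (j.negOnePow : (ZMod 5)⟦X⟧) * X ^ (tri (5 * j + 2)).toNat) fun j ↦ by
      have := natAbs_le_tri_add_one (5 * j + 2)
      exact (pow_dvd_pow X (by omega)).mul_left _
  have hreflect := hasSum_X_pow_tri_reflect hf
  rw [show (5 - 1 - 2 : ℤ) = 2 by norm_num] at hreflect
  have hneg : f = -f := hf.unique hreflect
  have hzero : f = 0 := by linear_combination 3 * hneg - f * five_eq_zero
  rwa [hzero] at hf

lemma hasSum_X_pow_tri_five_mul_add (r : Fin 5) :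
    HasSum (fun j : ℤ ↦ (j.negOnePow : (ZMod 5)⟦X⟧) * X ^ (tri (5 * j + r)).toNat)
      (![expandFive (thetaSeries 2 3), X * expandFive (thetaSeries 1 4), 0,
        -(X * expandFive (thetaSeries 1 4)), -expandFive (thetaSeries 2 3)] r) := by
  have h0 := hasSum_X_pow_tri_mul_add (R := ZMod 5) (d := 2) (r := 0) (by norm_num)
  have h1 := hasSum_X_pow_tri_mul_add (R := ZMod 5) (d := 2) (r := 1) (by norm_num)
  have h3 := hasSum_X_pow_tri_reflect h1
  have h4 := hasSum_X_pow_tri_reflect h0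
  have htri0 : tri 0 = 0 := rfl
  have htri1 : tri 1 = 1 := rfl
  norm_num [htri0, htri1] at h0 h1 h3 h4
  fin_cases r
  · simpa using h0
  · simpa using h1
  · simpa using hasSum_X_pow_tri_five_mul_add_two
  · simpa using h3
  · simpa using h4

theorem qPochInf_pow_three_zmod_five : (qPochInf X X ^ 3 : (ZMod 5)⟦X⟧) =
    expandFive (thetaSeries 2 3) + X * expandFive (2 * thetaSeries 1 4) := by
  have hresidue (r : Fin 5) := (hasSum_X_pow_tri_five_mul_add r).mul_left
    (((r : ℤ).negOnePow : (ZMod 5)⟦X⟧) * (r : ℤ))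
  have hsum := hasSum_int_of_hasSum_residues
    (u := fun k : ℤ ↦ (k.negOnePow : (ZMod 5)⟦X⟧) * (k : (ZMod 5)⟦X⟧) * X ^ (tri k).toNat)
    fun r ↦ (hresidue r).congr_fun fun j ↦ ?_
  · rw [hasSum_jacobi_cube.unique hsum, map_mul, map_ofNat]
    simp only [Fin.sum_univ_five, Matrix.cons_val]
    norm_num [Int.negOnePow_def]
    linear_combination -expandFive (thetaSeries 2 3) * five_eq_zero
  · push_cast [negOnePow_five_mul_add, five_eq_zero]
    ring

end JacobiCube

end Dissections

section LambertDissection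

variable {K : Type*} [Field K]

lemma expand_inv {p : ℕ} (hp : p ≠ 0) {f : K⟦X⟧} (hf : constantCoeff f ≠ 0) :
    expand p hp f⁻¹ = (expand p hp f)⁻¹ := by
  rw [PowerSeries.eq_inv_iff_mul_eq_one (by rwa [constantCoeff_expand]), ← map_mul,
    PowerSeries.inv_mul_cancel f hf, map_one]

lemma X_pow_mul_expand_lambertTerm {p : ℕ} (hp : p ≠ 0) (s : ℕ) {a k : ℤ} (hpos : 0 < k → 0 ≤ a)
    (hneg : k ≤ 0 → 0 ≤ a - k) :
    X ^ s * expand p hp (lambertTerm a k : K⟦X⟧) = lambertTerm (p * a + s) (p * k) := by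
  have hp' : (0 : ℤ) < p := by omega
  have hinv {n : ℕ} (hn : n ≠ 0) : expand p hp (1 - X ^ n : K⟦X⟧)⁻¹ = (1 - X ^ (p * n))⁻¹ := by
    rw [expand_inv hp (by simp [hn]), map_sub, map_one, map_pow, expand_X, pow_mul]
  have hmul {b : ℤ} (hb : 0 ≤ b) : (p * b).toNat = p * b.toNat := by
    rw [Int.toNat_mul (by positivity) hb, Int.toNat_natCast]
  have hmul_add {b : ℤ} (hb : 0 ≤ b) : (p * b + s).toNat = p * b.toNat + s := by
    rw [Int.toNat_add (by positivity) (by positivity), hmul hb, Int.toNat_natCast]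
  rcases eq_or_ne k 0 with rfl | hk
  · simp only [mul_zero, lambertTerm_zero_right, map_zero]
  simp only [lambertTerm, mul_pos_iff_of_pos_left hp']
  split_ifs with h
  · rw [hmul_add (hpos h), hmul h.le, map_mul, map_pow, expand_X, hinv (by omega)]
    ring
  · rw [show p * a + s - p * k = p * (a - k) + s by ring, hmul_add (hneg (not_lt.1 h)),
      show -(p * k) = p * -k by ring, hmul (by omega), map_neg, map_mul, map_pow, expand_X,
      hinv (by omega)]
    ring

lemma negOnePow_mul_lambertTerm_five_mul_add {r c : ℤ} {s : ℕ} (hr : 0 ≤ r) (hr' : r ≤ 4)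
    (hc : 0 ≤ c) (hrc : 4 * r ≤ c + 10) (hs : 3 * tri r = 5 * c + s) (j : ℤ) :
    ((5 * j + r).negOnePow : K⟦X⟧) * lambertTerm (3 * tri (5 * j + r)) (5 * (5 * j + r)) =
      (r.negOnePow : K⟦X⟧) * X ^ s * expandFive (appellTerm r c j) := by
  have hexp : 3 * tri (5 * j + r) = (5 : ℕ) * (15 * tri j + 3 * (r - 2) * j + c) + s := by
    have := two_mul_tri (5 * j + r)
    have := two_mul_tri r
    have := two_mul_tri j
    push_cast
    linarith
  have hlambert := X_pow_mul_expand_lambertTerm (K := K) (p := 5) (by norm_num) s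
    (a := 15 * tri j + 3 * (r - 2) * j + c) (k := 5 * j + r)
    (fun h ↦ (Nat.cast_nonneg _).trans (natAbs_le_appellTerm_exponent_of_pos hr hr' hc h))
    (fun h ↦ (Nat.cast_nonneg _).trans (natAbs_le_appellTerm_exponent_of_nonpos hr hr' hc hrc h))
  rw [← hexp, Nat.cast_ofNat] at hlambert
  rw [← hlambert, appellTerm, map_mul, map_intCast, negOnePow_five_mul_add]
  push_cast
  ring

variable [TopologicalSpace K] [IsTopologicalRing K]

lemma hasSum_lambertTerm_five_mul_add {r c : ℤ} {s : ℕ} (hr : 0 ≤ r) (hr' : r ≤ 4) (hc : 0 ≤ c)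
    (hrc : 4 * r ≤ c + 10) (hs : 3 * tri r = 5 * c + s) :
    HasSum (fun j : ℤ ↦ ((5 * j + r).negOnePow : K⟦X⟧) *
        lambertTerm (3 * tri (5 * j + r)) (5 * (5 * j + r)))
      ((r.negOnePow : K⟦X⟧) * X ^ s * expandFive (appellSeries r c)) := by
  have hsum := (hasSum_expand (show 5 ≠ 0 by norm_num) (hasSum_appellSeries (K := K) hr hr' hc
    hrc)).mul_left ((r.negOnePow : K⟦X⟧) * X ^ s)
  exact hsum.congr_fun fun j ↦ negOnePow_mul_lambertTerm_five_mul_add hr hr' hc hrc hs j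

lemma hasSum_lambertTerm_dissection :
    HasSum (fun k : ℤ ↦ (k.negOnePow : K⟦X⟧) * lambertTerm (3 * tri k) (5 * k))
      (expandFive (appellSeries 0 0 + appellSeries 4 6) -
        X ^ 3 * expandFive (appellSeries 1 0 + appellSeries 3 3) +
        X ^ 4 * expandFive (X * appellSeries 2 0)) := by
  let c : Fin 5 → ℤ := ![0, 0, 0, 3, 6]
  let s : Fin 5 → ℕ := ![0, 3, 9, 3, 0]
  have hc : ∀ r, 0 ≤ c r ∧ 4 * (r.val : ℤ) ≤ c r + 10 ∧ 3 * tri r.val = 5 * c r + s r := by decide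
  have hsum := hasSum_int_of_hasSum_residues (p := 5)
    (u := fun k : ℤ ↦ (k.negOnePow : K⟦X⟧) * lambertTerm (3 * tri k) (5 * k)) fun r : Fin 5 ↦
      hasSum_lambertTerm_five_mul_add (K := K) (r := r.val) (c := c r) (s := s r)
        (Nat.cast_nonneg _) (by omega) (hc r).1 (hc r).2.1 (hc r).2.2
  convert hsum using 1
  simp only [Fin.sum_univ_five, c, s, Matrix.cons_val, Int.negOnePow_def, map_add, map_mul,
    expand_X]
  norm_num
  ring

end LambertDissection

section Conclusion

lemma qPochInf_ne_zero {R : Type*} [CommRing R] [Nontrivial R] [TopologicalSpace R]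
    [IsTopologicalRing R] [T2Space R] {a q : R⟦X⟧} (ha : constantCoeff a = 0) (hq : X ∣ q) :
    qPochInf a q ≠ 0 := fun h ↦ by
  simpa [h] using constantCoeff_qPochInf ha hq

lemma thetaSeries_ne_zero {R : Type*} [CommRing R] [IsDomain R] [TopologicalSpace R]
    [IsTopologicalRing R] [T2Space R] {c c' : ℕ} (hc : c ≠ 0) (hc' : c' ≠ 0) :
    (thetaSeries c c' : R⟦X⟧) ≠ 0 := by
  have hne {b : ℕ} (hb : b ≠ 0) : (qPochInf (X ^ b) (X ^ (c + c')) : R⟦X⟧) ≠ 0 :=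
    qPochInf_ne_zero (by simp [hb]) (dvd_pow_self X (by omega))
  exact mul_ne_zero (hne (by omega)) (mul_ne_zero (hne hc') (hne hc))

local notation "E" => (qPochInf X X : (ZMod 5)⟦X⟧)
local notation "φ" => (qPochInf (X ^ 5) (X ^ 5) : (ZMod 5)⟦X⟧)
local notation "T₁" => (thetaSeries 1 4 : (ZMod 5)⟦X⟧)
local notation "T₂" => (thetaSeries 2 3 : (ZMod 5)⟦X⟧)

lemma expandFive_qPochInf_X_X : expandFive E = φ := by
  rw [expand_qPochInf _ dvd_rfl, expand_X]

lemma qPochInf_X_X_pow_five : E ^ 5 = φ := by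
  rw [← expandFive_qPochInf_X_X, expand_zmod]

lemma qPochInf_X_X_dissection : E = expandFive (residuePart 5 0 E) - X * expandFive φ +
    X ^ 2 * expandFive (residuePart 5 2 E) := by
  have h1 : residuePart 5 1 E = -φ := by
    rw [qPochInf_X_X, residuePart_five_one_pentagonalSeries, ← qPochInf_X_X,
      expandFive_qPochInf_X_X]
  have h3 : residuePart 5 3 E = 0 := by
    rw [qPochInf_X_X, residuePart_five_pentagonalSeries_eq_zero (by norm_num)]
  have h4 : residuePart 5 4 E = 0 := by
    rw [qPochInf_X_X, residuePart_five_pentagonalSeries_eq_zero (by norm_num)]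
  have hE := sum_X_pow_mul_expand_residuePart (show 5 ≠ 0 by norm_num) E
  simp only [Fin.sum_univ_five, Fin.coe_ofNat_eq_mod,
    Nat.reduceMod, h1, h3, h4, map_neg, map_zero] at hE
  linear_combination -hE

lemma residuePart_zero_mul_thetaSeries : residuePart 5 0 E * T₁ = φ * T₂ := by
  have hdissection := qPochInf_X_X_dissection
  have ha : residuePart 5 0 E ≠ 0 := fun h ↦ by
    have := congrArg (coeff 0) h
    simp [coeff_residuePart, constantCoeff_qPochInf] at this
  set a := residuePart 5 0 E
  set c := residuePart 5 2 E
  have hparts : ![a ^ 3 - 3 * X * φ * c ^ 2, -3 * a ^ 2 * φ + X * c ^ 3, 3 * a * (a * c + φ ^ 2),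
      -φ ^ 3 - 6 * a * φ * c, 3 * c * (a * c + φ ^ 2)] = ![T₂, 2 * T₁, 0, 0, 0] := by
    apply sum_X_pow_mul_expand_injective (show 5 ≠ 0 by norm_num)
    have hcube := qPochInf_pow_three_zmod_five
    rw [hdissection] at hcube
    simp only [Fin.sum_univ_five, Fin.coe_ofNat_eq_mod,
      Nat.reduceMod, Matrix.cons_val, map_add, map_sub, map_neg, map_mul, map_pow, map_ofNat,
      map_zero, expand_X] at hcube ⊢
    linear_combination hcube
  have h0 : a ^ 3 - 3 * X * φ * c ^ 2 = T₂ := congrFun hparts 0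
  have h1 : -3 * a ^ 2 * φ + X * c ^ 3 = 2 * T₁ := congrFun hparts 1
  have h2 : 3 * a * (a * c + φ ^ 2) = 0 := congrFun hparts 2
  have hac : a * c = -φ ^ 2 := by
    refine mul_left_cancel₀ ha ?_
    linear_combination 2 * h2 - a * (a * c + φ ^ 2) * five_eq_zero
  linear_combination (3 * X * φ ^ 2 * c ^ 2 - 3 * a ^ 3 * φ - a * T₁ + φ * T₂) * five_eq_zero -
    3 * a * h1 + 6 * φ * h0 + 3 * X * c ^ 2 * hac

lemma qPochInf_X_X_pow_four_dissection :
    E ^ 4 = expandFive (residuePart 5 0 E * T₂) + X * expandFive (residuePart 5 0 E * T₁) +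
      X ^ 2 * expandFive (residuePart 5 2 E * T₂ - 2 * φ * T₁) +
      X ^ 3 * expandFive (2 * residuePart 5 2 E * T₁) := by
  have hrel := congrArg expandFive residuePart_zero_mul_thetaSeries
  have hfour : E ^ 4 = E * E ^ 3 := pow_succ' _ _
  rw [qPochInf_pow_three_zmod_five] at hfour
  nth_rewrite 2 [qPochInf_X_X_dissection] at hfour
  simp only [map_mul, map_sub, map_ofNat] at hrel hfour ⊢
  linear_combination hfour + X * hrel

lemma residuePart_four_qPochInf_X_X_pow_four : residuePart 5 4 (E ^ 4) = 0 := by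
  rw [qPochInf_X_X_pow_four_dissection]
  have hparts := residuePart_sum_X_pow_mul_expand (show 5 ≠ 0 by norm_num)
    ![residuePart 5 0 E * T₂, residuePart 5 0 E * T₁, residuePart 5 2 E * T₂ - 2 * φ * T₁,
      2 * residuePart 5 2 E * T₁, 0] 4
  simpa [Fin.sum_univ_five] using hparts

lemma residuePart_four_eta4Series_mul :
    residuePart 5 4 eta4Series * E = residuePart 5 0 E *
      (T₁ * (appellSeries 1 0 + appellSeries 3 3) - X * T₂ * appellSeries 2 0) := by
  have hseries := neg_eq_iff_eq_neg.1
    (hasSum_lambertTerm_eta4Series.unique hasSum_lambertTerm_dissection)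
  have hfour := qPochInf_X_X_pow_four_dissection
  have hmul : eta4Series * expandFive E = eta4Series * E * E ^ 4 := by
    rw [expand_zmod]
    ring
  rw [← residuePart_mul_expand (by norm_num) (by norm_num), hmul, hseries, hfour]
  set a := residuePart 5 0 E
  set c := residuePart 5 2 E
  set s₀ : (ZMod 5)⟦X⟧ := appellSeries 0 0 + appellSeries 4 6
  set s₃ : (ZMod 5)⟦X⟧ := appellSeries 1 0 + appellSeries 3 3
  set s₄ : (ZMod 5)⟦X⟧ := appellSeries 2 0
  have hparts := residuePart_sum_X_pow_mul_expand (show 5 ≠ 0 by norm_num)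
    ![-(s₀ * (a * T₂)) + X * s₃ * (c * T₂ - 2 * φ * T₁) - X ^ 2 * s₄ * (a * T₁),
      -(s₀ * (a * T₁)) + X * s₃ * (2 * c * T₁) - X ^ 2 * s₄ * (c * T₂ - 2 * φ * T₁),
      -(s₀ * (c * T₂ - 2 * φ * T₁)) - X ^ 2 * s₄ * (2 * c * T₁),
      -(s₀ * (2 * c * T₁)) + s₃ * (a * T₂), a * (T₁ * s₃ - X * T₂ * s₄)] 4
  refine Eq.trans ?_ hparts
  congr 1
  simp only [Fin.sum_univ_five, Fin.coe_ofNat_eq_mod, Nat.reduceMod, Matrix.cons_val, map_add,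
    map_sub, map_neg, map_mul, map_pow, expand_X]
  ring

lemma residuePart_four_eta4Series :
    residuePart 5 4 eta4Series = E ^ 4 * expandFive (E ^ 3) := by
  have htheta := qPochInf_pow_mul_thetaSeries_eq_appellSeries (K := ZMod 5)
  have hT₂ : T₂ ≠ 0 := thetaSeries_ne_zero two_ne_zero three_ne_zero
  have hφ : φ ≠ 0 := qPochInf_ne_zero (by simp) (dvd_pow_self X (by norm_num))
  have hmul : residuePart 5 4 eta4Series * E = φ ^ 4 := by
    refine mul_left_cancel₀ hT₂ ?_
    rw [residuePart_four_eta4Series_mul]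
    linear_combination -residuePart 5 0 E * htheta + φ ^ 3 * residuePart_zero_mul_thetaSeries
  refine mul_right_cancel₀ hφ ?_
  rw [map_pow, expandFive_qPochInf_X_X]
  linear_combination E ^ 4 * hmul - residuePart 5 4 eta4Series * qPochInf_X_X_pow_five

lemma residuePart_four_residuePart_four_eta4Series :
    residuePart 5 4 (residuePart 5 4 eta4Series) = 0 := by
  rw [residuePart_four_eta4Series, residuePart_mul_expand (by norm_num) (by norm_num),
    residuePart_four_qPochInf_X_X_pow_four, zero_mul]

end Conclusion

end RankCongruence

/-- For every integer `n ≥ 0`, `η₄(25n+24) ≡ 0 (mod 5)`. -/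
theorem eta4_25n_24_mod_5 (n : ℕ) : eta4 (25 * n + 24) ≡ 0 [ZMOD 5] := by
  have hcoeff := congrArg (PowerSeries.coeff n)
    RankCongruence.residuePart_four_residuePart_four_eta4Series
  rw [RankCongruence.coeff_residuePart, RankCongruence.coeff_residuePart,
    RankCongruence.eta4Series, PowerSeries.coeff_mk, map_zero] at hcoeff
  rw [show 25 * n + 24 = 5 * (5 * n + 4) + 4 by ring, Int.modEq_zero_iff_dvd]
  exact (ZMod.intCast_zmod_eq_zero_iff_dvd _ 5).1 hcoeff
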